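/- arXiv:1801.02357 — 2 statements merged into one kernel-verified Lean document; each statement's English description precedes it below -/
import Mathlib

section
/- The modified (bounded-perturbation) index of the complete dihedral Enneper surface of order 5 equals 11: there exists R₀ > 0 such that ind_b(Σ₁⁵(R)) = 11 for every R ≥ R₀; equivalently, ind_b(Σ₁⁵) := lim_{R→∞} ind_b(Σ₁⁵(R)) = 11. -/
noncomputable section
open MeasureTheory Real

/-- The plane `ℝ²` as a Euclidean space. -/
abbrev E2 : Type := EuclideanSpace ℝ (Fin 2)

/-- The point of `ℝ²` with Cartesian coordinates `(x, y)`. -/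
def toE2 (x y : ℝ) : E2 := (WithLp.equiv 2 (Fin 2 → ℝ)).symm ![x, y]

/-- The second-variation quadratic form of the dihedral Enneper surface `Σ₁ⁿ(R)` of
order `n` and radius `R`, in the conformal planar coordinate `w`. -/
def QE (n : ℕ) (R : ℝ) (φ : E2 → ℝ) : ℝ :=
  ∫ w in Metric.ball (0 : E2) R,
    (‖gradient φ w‖ ^ 2 -
      (8 * (n : ℝ) ^ 2 * ‖w‖ ^ (2 * n - 2) / (1 + ‖w‖ ^ (2 * n)) ^ 2) * φ w ^ 2)

/-- The second-variation quadratic form of the complete dihedral Enneper surface `Σ₁ⁿ`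
(`R = ∞`). -/
def QEinf (n : ℕ) (φ : E2 → ℝ) : ℝ :=
  ∫ w : E2,
    (‖gradient φ w‖ ^ 2 -
      (8 * (n : ℝ) ^ 2 * ‖w‖ ^ (2 * n - 2) / (1 + ‖w‖ ^ (2 * n)) ^ 2) * φ w ^ 2)

/-- Membership in `F(B(0,R))`: smooth on the open ball `B(0,R)` with all partial
derivatives of order `≤ 2` bounded there. -/
def memFE (R : ℝ) (φ : E2 → ℝ) : Prop :=
  ContDiffOn ℝ (⊤ : ℕ∞) φ (Metric.ball (0 : E2) R) ∧
    ∀ i : ℕ, i ≤ 2 → ∃ C : ℝ,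
      ∀ w ∈ Metric.ball (0 : E2) R, ‖iteratedFDerivWithin ℝ i φ (Metric.ball (0 : E2) R) w‖ ≤ C

/-- The modified index `ind_b(Σ₁ⁿ(R))`: the supremum of the dimensions of
finite-dimensional subspaces of `F(B(0,R))` on which `Qⁿ_R` is negative definite. -/
def indbE (n : ℕ) (R : ℝ) : ℕ∞ :=
  sSup {d : ℕ∞ | ∃ V : Submodule ℝ (E2 → ℝ), FiniteDimensional ℝ V ∧
    (∀ φ ∈ V, memFE R φ) ∧ (∀ φ ∈ V, φ ≠ 0 → QE n R φ < 0) ∧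
    d = (Module.finrank ℝ V : ℕ∞)}

open Complex in
/-- The point of the unit circle in `ℂ` at angle `θ`. -/
def circlePoint (θ : ℝ) : ℂ := exp (θ * I)

/-- The potential of the Jacobi operator of the Enneper surface of order `5`, as a function of
the distance to the origin. -/
def potential (r : ℝ) : ℝ := 200 * r ^ 8 / (1 + r ^ 10) ^ 2

/-- The energy of `ψ` on the circle of radius `r`, so that the second variation is the integral
of this quantity over the radius. -/
def circleEnergy (ψ : ℂ → ℝ) (r : ℝ) : ℝ :=
  ∫ θ in -π..π, r * ((fderiv ℝ ψ (r * circlePoint θ) (circlePoint θ)) ^ 2 +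
    (fderiv ℝ ψ (r * circlePoint θ) (Complex.I * circlePoint θ)) ^ 2 -
    potential r * ψ (r * circlePoint θ) ^ 2)

/-- The standard isometry between `ℂ` and the Euclidean plane. -/
def planeIso : ℂ ≃ₗᵢ[ℝ] E2 := Complex.orthonormalBasisOneI.repr

@[fun_prop]
lemma continuous_circlePoint : Continuous circlePoint := by
  unfold circlePoint; fun_prop

lemma norm_circlePoint (θ : ℝ) : ‖circlePoint θ‖ = 1 := Complex.norm_exp_ofReal_mul_I θ

@[fun_prop]
lemma continuous_potential : Continuous potential := by
  unfold potential
  refine Continuous.div (by fun_prop) (by fun_prop) fun r => ?_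
  have : 0 ≤ r ^ 10 := Even.pow_nonneg (by decide) r
  positivity

lemma hasDerivAt_circlePoint (θ : ℝ) :
    HasDerivAt circlePoint (Complex.I * circlePoint θ) θ := by
  have h := ((Complex.ofRealCLM.hasDerivAt (x := θ)).mul_const Complex.I).cexp
  have h2 : circlePoint = fun x : ℝ => Complex.exp (x * Complex.I) := rfl
  rw [h2]
  simpa [mul_comm] using h

lemma norm_sq_eq_apply_circlePoint (A : ℂ →L[ℝ] ℝ) (θ : ℝ) :
    ‖A‖ ^ 2 = A (circlePoint θ) ^ 2 + A (Complex.I * circlePoint θ) ^ 2 := by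
  obtain ⟨v, rfl⟩ := (InnerProductSpace.toDual ℝ ℂ).surjective A
  have h : circlePoint θ = ⟨cos θ, sin θ⟩ := by
    rw [circlePoint, Complex.exp_mul_I, ← Complex.ofReal_cos, ← Complex.ofReal_sin]
    apply Complex.ext <;> simp [-Complex.ofReal_cos, -Complex.ofReal_sin]
  rw [LinearIsometryEquiv.norm_map, InnerProductSpace.toDual_apply_apply,
    InnerProductSpace.toDual_apply_apply, h, ← Complex.normSq_eq_norm_sq, Complex.normSq_apply]
  simp only [Complex.inner, Complex.mul_re, Complex.conj_re, Complex.conj_im, Complex.mul_im,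
    Complex.I_re, Complex.I_im]
  linear_combination (-(v.re ^ 2 + v.im ^ 2)) * sin_sq_add_cos_sq θ

lemma norm_gradient_planeIso (φ : E2 → ℝ) (z : ℂ) :
    ‖gradient φ (planeIso z)‖ = ‖fderiv ℝ (φ ∘ planeIso) z‖ := by
  rw [gradient, LinearIsometryEquiv.norm_map]
  have := planeIso.toContinuousLinearEquiv.comp_right_fderiv (f := φ) (x := z)
  have h2 : fderiv ℝ (φ ∘ planeIso) z = (fderiv ℝ φ (planeIso z)).comp
      (planeIso.toContinuousLinearEquiv : ℂ →L[ℝ] E2) := this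
  rw [h2]
  exact (ContinuousLinearMap.opNorm_comp_linearIsometryEquiv (fderiv ℝ φ (planeIso z))
    planeIso).symm

lemma continuous_circleEnergy_integrand {ψ : ℂ → ℝ} (hψ : ContDiff ℝ 1 ψ) :
    Continuous fun p : ℝ × ℝ => p.1 *
      ((fderiv ℝ ψ (p.1 * circlePoint p.2) (circlePoint p.2)) ^ 2 +
      (fderiv ℝ ψ (p.1 * circlePoint p.2) (Complex.I * circlePoint p.2)) ^ 2 -
      potential p.1 * ψ (p.1 * circlePoint p.2) ^ 2) := by
  have h1 := hψ.continuous_fderiv (by simp)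
  have h2 := hψ.continuous
  fun_prop

lemma continuous_circleEnergy {ψ : ℂ → ℝ} (hψ : ContDiff ℝ 1 ψ) :
    Continuous (circleEnergy ψ) :=
  intervalIntegral.continuous_parametric_intervalIntegral_of_continuous'
    (continuous_circleEnergy_integrand hψ) _ _

lemma QE_five_eq_integral_circleEnergy {φ : E2 → ℝ} (hφ : ContDiff ℝ 1 φ) {R : ℝ} (hR : 0 < R) :
    QE 5 R φ = ∫ r in (0 : ℝ)..R, circleEnergy (φ ∘ planeIso) r := by
  set ψ := φ ∘ planeIso with hψ_def
  have hψ : ContDiff ℝ 1 ψ := hφ.comp planeIso.contDiff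
  let g : ℂ → ℝ := fun z => ‖fderiv ℝ ψ z‖ ^ 2 - potential ‖z‖ * ψ z ^ 2
  have h1 : QE 5 R φ = ∫ z in Metric.ball (0 : ℂ) R, g z := by
    have hb : planeIso ⁻¹' Metric.ball (0 : E2) R = Metric.ball (0 : ℂ) R := by
      ext z; simp
    rw [QE, ← planeIso.measurePreserving.setIntegral_preimage_emb
      planeIso.toHomeomorph.measurableEmbedding, hb]
    refine setIntegral_congr_fun Metric.isOpen_ball.measurableSet fun z _ => ?_
    simp only [norm_gradient_planeIso, LinearIsometryEquiv.norm_map, g, potential, hψ_def,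
      Function.comp]
    norm_num
  have h2 : ∫ z in Metric.ball (0 : ℂ) R, g z =
      ∫ p in Set.Ioo 0 R ×ˢ Set.Ioo (-π) π, p.1 *
      ((fderiv ℝ ψ (p.1 * circlePoint p.2) (circlePoint p.2)) ^ 2 +
      (fderiv ℝ ψ (p.1 * circlePoint p.2) (Complex.I * circlePoint p.2)) ^ 2 -
      potential p.1 * ψ (p.1 * circlePoint p.2) ^ 2) := by
    rw [← integral_indicator Metric.isOpen_ball.measurableSet,
      ← Complex.integral_comp_polarCoord_symm]
    have hs : Set.Ioo 0 R ×ˢ Set.Ioo (-π) π ⊆ polarCoord.target := by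
      rw [polarCoord_target]
      exact Set.prod_mono Set.Ioo_subset_Ioi_self subset_rfl
    have hm : MeasurableSet (Set.Ioo 0 R ×ˢ Set.Ioo (-π) π) :=
      measurableSet_Ioo.prod measurableSet_Ioo
    rw [setIntegral_eq_of_subset_of_forall_sdiff_eq_zero
      polarCoord.open_target.measurableSet hs]
    · refine setIntegral_congr_fun hm fun p hp => ?_
      have hp1 : 0 < p.1 := hp.1.1
      have he : Complex.polarCoord.symm p = p.1 * circlePoint p.2 := by
        rw [Complex.polarCoord_symm_apply, circlePoint, Complex.exp_mul_I]
        simp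
      have hn : ‖(p.1 : ℂ) * circlePoint p.2‖ = p.1 := by
        rw [norm_mul, norm_circlePoint, mul_one, Complex.norm_real, norm_of_nonneg hp1.le]
      have hmem : (p.1 : ℂ) * circlePoint p.2 ∈ Metric.ball (0 : ℂ) R := by
        rw [mem_ball_zero_iff, hn]; exact hp.1.2
      simp only [he, Set.indicator_of_mem hmem, g, hn, smul_eq_mul,
        norm_sq_eq_apply_circlePoint _ p.2]
    · rintro p ⟨hp, hp'⟩
      rw [polarCoord_target] at hp
      have : Complex.polarCoord.symm p ∉ Metric.ball (0 : ℂ) R := by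
        rw [mem_ball_zero_iff, Complex.norm_polarCoord_symm, abs_of_pos hp.1]
        exact fun h => hp' ⟨⟨hp.1, h⟩, hp.2⟩
      rw [Set.indicator_of_notMem this, smul_zero]
  rw [h1, h2, Measure.volume_eq_prod, setIntegral_prod]
  · rw [intervalIntegral.integral_of_le hR.le, integral_Ioc_eq_integral_Ioo]
    refine setIntegral_congr_fun measurableSet_Ioo fun r _ => ?_
    rw [circleEnergy, intervalIntegral.integral_of_le (by linarith [pi_pos]),
      integral_Ioc_eq_integral_Ioo]
  · rw [← Measure.volume_eq_prod]
    exact ((continuous_circleEnergy_integrand hψ).continuousOn.integrableOn_compact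
      (isCompact_Icc.prod isCompact_Icc)).mono_set
      (Set.prod_mono Set.Ioo_subset_Icc_self Set.Ioo_subset_Icc_self)

lemma hasDerivAt_intervalIntegral_of_continuous {E : Type*} [NormedAddCommGroup E]
    [NormedSpace ℝ E] {F F' : ℝ → ℝ → E} {a b : ℝ}
    (hF : Continuous F.uncurry) (hF' : Continuous F'.uncurry)
    (h : ∀ x t, HasDerivAt (fun y => F y t) (F' x t) x) (x : ℝ) :
    HasDerivAt (fun y => ∫ t in a..b, F y t) (∫ t in a..b, F' x t) x := by
  obtain ⟨C, hC⟩ := ((isCompact_Icc (a := x - 1) (b := x + 1)).prod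
    (isCompact_uIcc (a := a) (b := b))).exists_bound_of_continuousOn hF'.continuousOn
  have hc (y : ℝ) : Continuous (F y) := hF.comp (by fun_prop : Continuous fun t => (y, t))
  have hc' : Continuous (F' x) := hF'.comp (by fun_prop : Continuous fun t => (x, t))
  refine (intervalIntegral.hasDerivAt_integral_of_dominated_loc_of_deriv_le
    (s := Set.Icc (x - 1) (x + 1)) (bound := fun _ => C) (Icc_mem_nhds (by simp) (by simp))
    (.of_forall fun y => (hc y).aestronglyMeasurable) ((hc x).intervalIntegrable _ _)
    hc'.aestronglyMeasurable (.of_forall fun t ht y hy => ?_) (by simp)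
    (.of_forall fun t _ y _ => h y t)).2
  exact hC (y, t) ⟨hy, Set.uIoc_subset_uIcc ht⟩

lemma neg_pi_lt_pi : -π < π := neg_lt_self pi_pos

/-- The complex Fourier coefficients of a real function on `(-π, π]`. -/
def circleCoeff (p : ℝ → ℝ) (k : ℤ) : ℂ := fourierCoeffOn neg_pi_lt_pi (fun θ => (p θ : ℂ)) k

lemma circleCoeff_eq_integral (p : ℝ → ℝ) (k : ℤ) :
    circleCoeff p k = (1 / (π - -π)) •
      ∫ θ in -π..π, fourier (-k) (θ : AddCircle (π - -π)) * (p θ : ℂ) :=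
  fourierCoeffOn_eq_integral _ _ _

lemma hasSum_sq_circleCoeff {p : ℝ → ℝ} (hp : Continuous p) :
    HasSum (fun k => 2 * π * ‖circleCoeff p k‖ ^ 2) (∫ θ in -π..π, p θ ^ 2) := by
  have hL : MemLp (fun θ => (p θ : ℂ)) 2 (volume.restrict (Set.Ioc (-π) π)) := by
    have : IsFiniteMeasure (volume.restrict (Set.Ioc (-π) π)) := inferInstance
    obtain ⟨C, hC⟩ := (isCompact_Icc (a := -π) (b := π)).exists_bound_of_continuousOn
      hp.continuousOn
    refine MemLp.of_bound (by fun_prop : Continuous fun θ => (p θ : ℂ)).aestronglyMeasurable C ?_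
    filter_upwards [ae_restrict_mem measurableSet_Ioc] with θ hθ
    simpa using hC θ (Set.Ioc_subset_Icc_self hθ)
  have h := (hasSum_sq_fourierCoeffOn neg_pi_lt_pi hL).mul_left (2 * π)
  have hv : 2 * π * (π - -π)⁻¹ • ∫ θ in -π..π, ‖(p θ : ℂ)‖ ^ 2 = ∫ θ in -π..π, p θ ^ 2 := by
    simp only [Complex.norm_real, norm_eq_abs, sq_abs, smul_eq_mul]
    have := pi_ne_zero
    rw [sub_neg_eq_add, ← two_mul]
    field_simp
  rwa [hv] at h

lemma sum_sq_circleCoeff_le {p : ℝ → ℝ} (hp : Continuous p) (s : Finset ℤ) :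
    2 * π * ∑ k ∈ s, ‖circleCoeff p k‖ ^ 2 ≤ ∫ θ in -π..π, p θ ^ 2 := by
  rw [Finset.mul_sum]
  exact sum_le_hasSum s (fun k _ => by positivity) (hasSum_sq_circleCoeff hp)

lemma circleCoeff_deriv {p t : ℝ → ℝ} (ht : Continuous t) (h : ∀ θ, HasDerivAt p (t θ) θ)
    (hper : p π = p (-π)) (k : ℤ) : circleCoeff t k = Complex.I * k * circleCoeff p k := by
  rcases eq_or_ne k 0 with rfl | hk
  · rw [circleCoeff_eq_integral]
    have : ∫ θ in -π..π, (t θ : ℂ) = 0 := by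
      rw [intervalIntegral.integral_ofReal, intervalIntegral.integral_eq_sub_of_hasDerivAt
        (fun x _ => h x) (ht.intervalIntegrable _ _), hper]
      simp
    simp [this]
  · have h1 := fourierCoeffOn_of_hasDerivAt neg_pi_lt_pi hk (fun x _ => (h x).ofReal_comp)
      ((by fun_prop : Continuous fun θ => (t θ : ℂ)).intervalIntegrable (-π) π)
    rw [circleCoeff, circleCoeff, h1, hper, sub_self, mul_zero]
    have : (k : ℂ) ≠ 0 := by exact_mod_cast hk
    have : (π : ℂ) ≠ 0 := by exact_mod_cast pi_ne_zero
    field_simp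
    push_cast
    ring

lemma circleCoeff_linear_combination {p q : ℝ → ℝ} (hp : Continuous p) (hq : Continuous q)
    (a b : ℝ) (k : ℤ) :
    circleCoeff (fun θ => a * p θ + b * q θ) k = a • circleCoeff p k + b • circleCoeff q k := by
  simp only [circleCoeff_eq_integral]
  rw [smul_comm a, smul_comm b, ← smul_add, ← intervalIntegral.integral_smul a,
    ← intervalIntegral.integral_smul b, ← intervalIntegral.integral_add]
  · congr 2 with θ
    push_cast
    simp only [Complex.real_smul]
    ring
  all_goals
    apply Continuous.intervalIntegrable
    have := (fourier (T := π - -π) (-k)).continuous.comp (AddCircle.continuous_mk' _)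
    fun_prop

lemma circleCoeff_sub_const_mul {p q : ℝ → ℝ} (hp : Continuous p) (hq : Continuous q) (a : ℝ)
    (k : ℤ) :
    circleCoeff (fun θ => p θ - a * q θ) k = circleCoeff p k - a • circleCoeff q k := by
  simpa [sub_eq_add_neg] using circleCoeff_linear_combination hp hq 1 (-a) k

lemma circleCoeff_neg (p : ℝ → ℝ) (k : ℤ) :
    circleCoeff p (-k) = starRingEnd ℂ (circleCoeff p k) := by
  rw [circleCoeff_eq_integral, circleCoeff_eq_integral, Complex.real_smul, Complex.real_smul,
    map_mul, Complex.conj_ofReal, intervalIntegral.integral_of_le neg_pi_lt_pi.le,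
    intervalIntegral.integral_of_le neg_pi_lt_pi.le, ← integral_conj]
  simp

lemma hasDerivAt_circleCoeff {F F' : ℝ → ℝ → ℝ} (hF : Continuous F.uncurry)
    (hF' : Continuous F'.uncurry) (h : ∀ x t, HasDerivAt (fun y => F y t) (F' x t) x) (x : ℝ)
    (k : ℤ) : HasDerivAt (fun y => circleCoeff (F y) k) (circleCoeff (F' x) k) x := by
  simp only [circleCoeff_eq_integral]
  refine HasDerivAt.const_smul (1 / (π - -π)) ?_
  have hc : Continuous fun t : ℝ => fourier (-k) (t : AddCircle (π - -π)) :=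
    (fourier (T := π - -π) (-k)).continuous.comp (AddCircle.continuous_mk' _)
  apply hasDerivAt_intervalIntegral_of_continuous
    (F := fun y θ => fourier (-k) (θ : AddCircle (π - -π)) * (F y θ : ℂ))
    (F' := fun y θ => fourier (-k) (θ : AddCircle (π - -π)) * (F' y θ : ℂ))
  · exact (hc.comp continuous_snd).mul (Complex.continuous_ofReal.comp hF)
  · exact (hc.comp continuous_snd).mul (Complex.continuous_ofReal.comp hF')
  · exact fun x t => (h x t).ofReal_comp.const_mul _

lemma circleCoeff_const (c : ℝ) : circleCoeff (fun _ => c) 0 = c := by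
  rw [circleCoeff_eq_integral]
  simp

/-- A sharpened Wirtinger inequality keeping track of the modes of order at most `5`. -/
lemma wirtinger_six {p t : ℝ → ℝ} (ht : Continuous t) (h : ∀ θ, HasDerivAt p (t θ) θ)
    (hper : p π = p (-π)) :
    36 * (∫ θ in -π..π, p θ ^ 2) +
      2 * π * ∑ k ∈ Finset.Icc (-5 : ℤ) 5, ((k : ℝ) ^ 2 - 36) * ‖circleCoeff p k‖ ^ 2 ≤
      ∫ θ in -π..π, t θ ^ 2 := by
  have hp : Continuous p := continuous_iff_continuousAt.2 fun x => (h x).continuousAt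
  have hs := (hasSum_sq_circleCoeff ht).sub ((hasSum_sq_circleCoeff hp).mul_left 36)
  have hle := sum_le_hasSum (Finset.Icc (-5 : ℤ) 5) (fun k hk => ?_) hs
  · rw [Finset.mul_sum]
    calc _ ≤ _ := add_le_add_right ((Finset.sum_congr rfl fun k _ => ?_).trans_le hle) _
      _ = _ := by ring
    rw [circleCoeff_deriv ht h hper]
    simp only [norm_mul, Complex.norm_I, Complex.norm_intCast, mul_pow, sq_abs]
    ring
  · rw [circleCoeff_deriv ht h hper]
    simp only [norm_mul, Complex.norm_I, Complex.norm_intCast, mul_pow, sq_abs]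
    have hk' : (36 : ℝ) ≤ (k : ℝ) ^ 2 := by
      rw [Finset.mem_Icc, not_and_or, not_le, not_le] at hk
      have : (36 : ℤ) ≤ k ^ 2 := by rcases hk with hk | hk <;> nlinarith
      exact_mod_cast this
    have : 0 ≤ 2 * π * ‖circleCoeff p k‖ ^ 2 * ((k : ℝ) ^ 2 - 36) :=
      mul_nonneg (by positivity) (by linarith)
    linarith

/-- Radial logarithmic derivative of `(r ^ 10 - 1) / (r ^ 10 + 1)`, a radial Jacobi function. -/
def lowRatio (r : ℝ) : ℝ := 20 * r ^ 10 / (r ^ 20 - 1)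

/-- Radial logarithmic derivative of the radial factor of the Jacobi functions with angular
frequency `6`. -/
def highRatio (r : ℝ) : ℝ := 6 - 100 * r ^ 10 / ((1 + r ^ 10) * (11 + r ^ 10))

lemma pow_twenty_sub_one_ne_zero {r : ℝ} (h0 : 0 ≤ r) (h1 : r ≠ 1) : r ^ 20 - 1 ≠ 0 := by
  rw [sub_ne_zero]
  exact fun h => h1 ((pow_eq_one_iff_of_nonneg h0 (by norm_num)).1 h)

lemma hasDerivAt_lowRatio {r : ℝ} (h0 : 0 < r) (h1 : r ≠ 1) :
    HasDerivAt lowRatio (-(r ^ 2 * potential r + lowRatio r ^ 2) / r) r := by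
  have h := pow_twenty_sub_one_ne_zero h0.le h1
  have h10 : r ^ 10 - 1 ≠ 0 := fun h' => h (by linear_combination (r ^ 10 + 1) * h')
  have := ((hasDerivAt_pow 10 r).const_mul 20).fun_div ((hasDerivAt_pow 20 r).sub_const 1) h
  refine this.congr_deriv ?_
  have h' : r ^ 20 - 1 = (r ^ 10 - 1) * (1 + r ^ 10) := by ring
  simp only [potential, lowRatio, h']
  have : 0 < 1 + r ^ 10 := by positivity
  field_simp
  ring

lemma hasDerivAt_highRatio {r : ℝ} (h0 : 0 < r) :
    HasDerivAt highRatio ((36 - r ^ 2 * potential r - highRatio r ^ 2) / r) r := by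
  have hp : 0 < 1 + r ^ 10 := by positivity
  have hp' : 0 < 11 + r ^ 10 := by positivity
  have := (((hasDerivAt_pow 10 r).const_mul 100).fun_div
    (((hasDerivAt_pow 10 r).const_add 1).fun_mul ((hasDerivAt_pow 10 r).const_add 11))
    (by positivity)).const_sub 6
  refine this.congr_deriv ?_
  simp only [potential, highRatio]
  field_simp
  ring

lemma continuous_highRatio : Continuous highRatio := by
  unfold highRatio
  refine continuous_const.sub (Continuous.div (by fun_prop) (by fun_prop) fun r => ?_)
  have : 0 ≤ r ^ 10 := Even.pow_nonneg (by decide) r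
  positivity

lemma highRatio_nonneg (r : ℝ) : 0 ≤ highRatio r := by
  have h : 0 ≤ r ^ 10 := Even.pow_nonneg (by decide) r
  rw [highRatio, sub_nonneg, div_le_iff₀ (by positivity)]
  nlinarith [sq_nonneg (r ^ 10 - 2)]

lemma lowRatio_nonneg {r : ℝ} (h : 1 ≤ r) : 0 ≤ lowRatio r :=
  div_nonneg (by positivity) (sub_nonneg.2 (one_le_pow₀ h))

lemma continuousAt_lowRatio {r : ℝ} (h0 : 0 ≤ r) (h1 : r ≠ 1) : ContinuousAt lowRatio r :=
  ContinuousAt.div (by fun_prop) (by fun_prop) (pow_twenty_sub_one_ne_zero h0 h1)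

lemma continuousAt_lowRatio_mul_norm_sq {c : ℝ → ℂ} (hc : DifferentiableAt ℝ c 1)
    (h1 : c 1 = 0) : ContinuousAt (fun r => lowRatio r * ‖c r‖ ^ 2) 1 := by
  have h : (fun r => lowRatio r * ‖c r‖ ^ 2) =ᶠ[nhds 1] fun r =>
      20 * r ^ 10 / (∑ i ∈ Finset.range 20, r ^ i) * inner ℝ (dslope c 1 r) (c r) := by
    filter_upwards [lt_mem_nhds (zero_lt_one' ℝ)] with r hr
    rcases eq_or_ne r 1 with rfl | hr1
    · simp [h1]
    · have hs : 0 < ∑ i ∈ Finset.range 20, r ^ i :=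
        Finset.sum_pos (fun i _ => by positivity) (by simp)
      have hr1' := sub_ne_zero.2 hr1
      have hd : c r = (r - 1) • dslope c 1 r := by rw [sub_smul_dslope, h1, sub_zero]
      rw [← real_inner_self_eq_norm_sq, lowRatio, ← geom_sum_mul]
      nth_rewrite 1 [hd]
      rw [real_inner_smul_left]
      field_simp
  refine ContinuousAt.congr ?_ h.symm
  refine ContinuousAt.mul (ContinuousAt.div (by fun_prop) (by fun_prop) (by simp)) ?_
  exact (continuousAt_dslope_same.2 hc).inner hc.continuousAt

lemma le_integral_circle {p s v : ℝ → ℝ} {r V a b : ℝ} (hs : Continuous s) (hv : Continuous v)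
    (hpv : ∀ θ, HasDerivAt p (r * v θ) θ) (hper : p π = p (-π)) (hr : 0 < r) :
    (36 - r ^ 2 * V - a ^ 2) / r * ((∫ θ in -π..π, p θ ^ 2) -
        2 * π * ∑ k ∈ Finset.Icc (-5 : ℤ) 5, ‖circleCoeff p k‖ ^ 2) +
      a * ((∫ θ in -π..π, 2 * p θ * s θ) - 2 * π * ∑ k ∈ Finset.Icc (-5 : ℤ) 5,
        2 * inner ℝ (circleCoeff p k) (circleCoeff s k)) +
      2 * π * ∑ k ∈ Finset.Icc (-5 : ℤ) 5, (-(r ^ 2 * V + b ^ 2) / r * ‖circleCoeff p k‖ ^ 2 +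
        b * (2 * inner ℝ (circleCoeff p k) (circleCoeff s k))) ≤
      ∫ θ in -π..π, r * (s θ ^ 2 + v θ ^ 2 - V * p θ ^ 2) := by
  have hp : Continuous p := continuous_iff_continuousAt.2 fun x => (hpv x).continuousAt
  have hW := wirtinger_six (by fun_prop) hpv hper
  have hB := sum_sq_circleCoeff_le (p := fun θ => s θ - a / r * p θ) (by fun_prop)
    (Finset.Icc (-5) 5)
  simp only [circleCoeff_sub_const_mul hs hp] at hB
  have expand (x : ℝ) (k : ℤ) : ‖circleCoeff s k - x • circleCoeff p k‖ ^ 2 =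
      ‖circleCoeff s k‖ ^ 2 - 2 * x * inner ℝ (circleCoeff p k) (circleCoeff s k) +
        x ^ 2 * ‖circleCoeff p k‖ ^ 2 := by
    rw [norm_sub_sq_real, real_inner_smul_right, norm_smul, mul_pow, norm_eq_abs, sq_abs,
      real_inner_comm]
    ring
  have hM : 0 ≤ ∑ k ∈ Finset.Icc (-5 : ℤ) 5, ‖circleCoeff s k - (b / r) • circleCoeff p k‖ ^ 2 :=
    Finset.sum_nonneg fun _ _ => by positivity
  have hK : 0 ≤ ∑ k ∈ Finset.Icc (-5 : ℤ) 5, (k : ℝ) ^ 2 * ‖circleCoeff p k‖ ^ 2 :=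
    Finset.sum_nonneg fun _ _ => by positivity
  have i1 : ∫ θ in -π..π, (s θ - a / r * p θ) ^ 2 = (∫ θ in -π..π, s θ ^ 2) -
      a / r * (∫ θ in -π..π, 2 * p θ * s θ) + (a / r) ^ 2 * ∫ θ in -π..π, p θ ^ 2 := by
    rw [← intervalIntegral.integral_const_mul, ← intervalIntegral.integral_const_mul,
      ← intervalIntegral.integral_sub, ← intervalIntegral.integral_add]
    · congr 1 with θ
      ring
    all_goals exact Continuous.intervalIntegrable (by fun_prop) _ _
  have i2 : ∫ θ in -π..π, (r * v θ) ^ 2 = r ^ 2 * ∫ θ in -π..π, v θ ^ 2 := by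
    simp only [mul_pow, intervalIntegral.integral_const_mul]
  have i3 : ∫ θ in -π..π, r * (s θ ^ 2 + v θ ^ 2 - V * p θ ^ 2) =
      r * ((∫ θ in -π..π, s θ ^ 2) + (∫ θ in -π..π, v θ ^ 2) - V * ∫ θ in -π..π, p θ ^ 2) := by
    rw [intervalIntegral.integral_const_mul, intervalIntegral.integral_sub,
      intervalIntegral.integral_add, intervalIntegral.integral_const_mul]
    all_goals exact Continuous.intervalIntegrable (by fun_prop) _ _
  rw [i3]
  rw [i2] at hW
  rw [i1] at hB
  simp only [expand, sub_mul, Finset.sum_add_distrib, Finset.sum_sub_distrib, ← Finset.mul_sum]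
    at hB hM hW ⊢
  generalize (∑ k ∈ Finset.Icc (-5 : ℤ) 5, (k : ℝ) ^ 2 * ‖circleCoeff p k‖ ^ 2) = K at *
  generalize (∑ k ∈ Finset.Icc (-5 : ℤ) 5, ‖circleCoeff p k‖ ^ 2) = L at *
  generalize (∑ k ∈ Finset.Icc (-5 : ℤ) 5, ‖circleCoeff s k‖ ^ 2) = D at *
  generalize (∑ k ∈ Finset.Icc (-5 : ℤ) 5,
    inner ℝ (circleCoeff p k) (circleCoeff s k)) = N at *
  generalize (∫ θ in -π..π, p θ ^ 2) = A at *
  generalize (∫ θ in -π..π, s θ ^ 2) = S at *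
  generalize (∫ θ in -π..π, v θ ^ 2) = W at *
  generalize (∫ θ in -π..π, 2 * p θ * s θ) = M at *
  have hM' := mul_nonneg (by positivity : 0 ≤ 2 * π * r ^ 2) hM
  have hK' := mul_nonneg (by positivity : 0 ≤ 2 * π) hK
  have hB' := mul_le_mul_of_nonneg_left hB (sq_nonneg r)
  rw [← sub_nonneg]
  refine (mul_nonneg_iff_of_pos_left hr).1 ?_
  field_simp at hM' hB' ⊢
  linarith

lemma integral_circleEnergy_nonneg {ψ : ℂ → ℝ} (hψ : ContDiff ℝ 1 ψ) {R : ℝ} (hR : 1 ≤ R)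
    (h : ∀ k ∈ Finset.Icc (-5 : ℤ) 5, circleCoeff (fun θ => ψ (circlePoint θ)) k = 0) :
    0 ≤ ∫ r in (0 : ℝ)..R, circleEnergy ψ r := by
  have hcψ := hψ.continuous
  have hcψ' := hψ.continuous_fderiv (by simp)
  let F : ℝ → ℝ → ℝ := fun r θ => ψ (r * circlePoint θ)
  let F' : ℝ → ℝ → ℝ := fun r θ => fderiv ℝ ψ (r * circlePoint θ) (circlePoint θ)
  have hF : Continuous F.uncurry := by simp only [F, Function.uncurry_def]; fun_prop
  have hF' : Continuous F'.uncurry := by simp only [F', Function.uncurry_def]; fun_prop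
  have hdψ (z : ℂ) : HasFDerivAt ψ (fderiv ℝ ψ z) z :=
    (hψ.differentiable (by simp) z).hasFDerivAt
  have hFF' (r θ : ℝ) : HasDerivAt (fun y => F y θ) (F' r θ) r := by
    have h1 : HasDerivAt (fun y : ℝ => (y : ℂ) * circlePoint θ) (circlePoint θ) r := by
      simpa using (Complex.ofRealCLM.hasDerivAt (x := r)).mul_const (circlePoint θ)
    exact (hdψ _).comp_hasDerivAt r h1
  let A : ℝ → ℝ := fun r => ∫ θ in -π..π, F r θ ^ 2
  let c : ℤ → ℝ → ℂ := fun k r => circleCoeff (F r) k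
  have hA (r : ℝ) : HasDerivAt A (∫ θ in -π..π, 2 * F r θ * F' r θ) r :=
    hasDerivAt_intervalIntegral_of_continuous (F := fun r θ => F r θ ^ 2)
      (F' := fun r θ => 2 * F r θ * F' r θ) (by simp only [Function.uncurry_def] at *; fun_prop)
      (by simp only [Function.uncurry_def] at *; fun_prop)
      (fun r θ => by simpa using (hFF' r θ).fun_pow 2) r
  have hc (k : ℤ) (r : ℝ) : HasDerivAt (c k) (circleCoeff (F' r) k) r :=
    hasDerivAt_circleCoeff hF hF' hFF' r k
  let G : ℝ → ℝ := fun r =>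
    highRatio r * (A r - 2 * π * ∑ k ∈ Finset.Icc (-5 : ℤ) 5, ‖c k r‖ ^ 2) +
    2 * π * ∑ k ∈ Finset.Icc (-5 : ℤ) 5, lowRatio r * ‖c k r‖ ^ 2
  have hG {r : ℝ} (h0 : 0 < r) (h1 : r ≠ 1) :
      ∃ G', HasDerivAt G G' r ∧ G' ≤ circleEnergy ψ r := by
    refine ⟨_, ((hasDerivAt_highRatio h0).fun_mul ((hA r).fun_sub
      ((HasDerivAt.fun_sum fun k _ => (hc k r).norm_sq).const_mul (2 * π)))).fun_add
      ((HasDerivAt.fun_sum fun k _ => (hasDerivAt_lowRatio h0 h1).fun_mul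
        (hc k r).norm_sq).const_mul (2 * π)), ?_⟩
    refine le_integral_circle (p := F r) (s := F' r)
      (v := fun θ => fderiv ℝ ψ (r * circlePoint θ) (Complex.I * circlePoint θ))
      (by fun_prop) (by fun_prop) (fun θ => ?_) ?_ h0
    · have := (hdψ _).comp_hasDerivAt θ ((hasDerivAt_circlePoint θ).const_mul (r : ℂ))
      refine this.congr_deriv ?_
      rw [← Complex.real_smul (z := Complex.I * circlePoint θ), map_smul, smul_eq_mul]
    · simp [F, circlePoint, Complex.exp_neg]
  have hGc {r : ℝ} (h0 : 0 ≤ r) : ContinuousAt G r := by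
    have hck (k : ℤ) : ContinuousAt (c k) r := (hc k r).continuousAt
    refine ((continuous_highRatio.continuousAt).mul ((hA r).continuousAt.sub (by fun_prop))).add
      (continuousAt_const.mul (tendsto_finsetSum _ fun k hk => ?_))
    rcases eq_or_ne r 1 with rfl | h1
    · refine continuousAt_lowRatio_mul_norm_sq (hc k 1).differentiableAt ?_
      simpa [c, F] using h k hk
    · exact (continuousAt_lowRatio h0 h1).mul ((hck k).norm.pow 2)
  have step {x y : ℝ} (hx : 0 ≤ x) (hxy : x ≤ y) (hne : ∀ r ∈ Set.Ioo x y, r ≠ 1) :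
      G y - G x ≤ ∫ r in x..y, circleEnergy ψ r := by
    choose! G' hG' using fun r (hr : r ∈ Set.Ioo x y) => hG (hx.trans_lt hr.1) (hne r hr)
    exact intervalIntegral.sub_le_integral_of_hasDeriv_right_of_le hxy
      (fun r hr => (hGc (hx.trans hr.1)).continuousWithinAt)
      (fun r hr => (hG' r hr).1.hasDerivWithinAt)
      (continuous_circleEnergy hψ).continuousOn.integrableOn_Icc (fun r hr => (hG' r hr).2)
  have h01 := step le_rfl zero_le_one fun r hr => hr.2.ne
  have h1R := step zero_le_one hR fun r hr => hr.1.ne'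
  have hG0 : G 0 ≤ 0 := by
    have hA0 : A 0 = 2 * π * ψ 0 ^ 2 := by simp [A, F, two_mul]
    have hc0 : ‖c 0 0‖ ^ 2 = ψ 0 ^ 2 := by
      have : F 0 = fun _ => ψ 0 := by funext; simp [F]
      simp [c, this, circleCoeff_const]
    have hle : ‖c 0 0‖ ^ 2 ≤ ∑ k ∈ Finset.Icc (-5 : ℤ) 5, ‖c k 0‖ ^ 2 :=
      Finset.single_le_sum (f := fun k => ‖c k 0‖ ^ 2) (fun k _ => by positivity) (by simp)
    have hl : lowRatio 0 = 0 := by simp [lowRatio]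
    simp only [G, hl, zero_mul, Finset.sum_const_zero, mul_zero, add_zero]
    refine mul_nonpos_of_nonneg_of_nonpos (highRatio_nonneg 0) ?_
    rw [hA0, ← hc0, ← mul_sub]
    exact mul_nonpos_of_nonneg_of_nonpos (by positivity) (by linarith)
  have hGR : 0 ≤ G R := by
    have hcF : Continuous (F R) := by fun_prop
    refine add_nonneg (mul_nonneg (highRatio_nonneg R)
      (sub_nonneg.2 (sum_sq_circleCoeff_le hcF _))) ?_
    exact mul_nonneg (by positivity) (Finset.sum_nonneg fun k _ =>
      mul_nonneg (lowRatio_nonneg hR) (by positivity))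
  have hi (x y : ℝ) : IntervalIntegrable (circleEnergy ψ) volume x y :=
    (continuous_circleEnergy hψ).intervalIntegrable x y
  rw [← intervalIntegral.integral_add_adjacent_intervals (hi 0 1) (hi 1 R)]
  linarith

lemma exists_contDiff_eq_on_ball {φ : E2 → ℝ} {R' R : ℝ} (h0 : 0 < R') (hlt : R' < R)
    (hφ : ContDiffOn ℝ 1 φ (Metric.ball 0 R)) :
    ∃ φ' : E2 → ℝ, ContDiff ℝ 1 φ' ∧ ∀ w ∈ Metric.ball (0 : E2) R', φ' w = φ w := by
  let χ : ContDiffBump (0 : E2) := ⟨R', (R' + R) / 2, h0, by linarith⟩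
  refine ⟨fun w => χ w * φ w, contDiff_iff_contDiffAt.2 fun w => ?_, fun w hw => ?_⟩
  · by_cases hw : w ∈ Metric.ball (0 : E2) R
    · exact χ.contDiff.contDiffAt.mul (hφ.contDiffAt (Metric.isOpen_ball.mem_nhds hw))
    · have hw' : w ∉ tsupport χ := by
        rw [χ.tsupport_eq]
        simp only [mem_ball_zero_iff, not_lt] at hw
        simp only [mem_closedBall_zero_iff, not_le, χ]
        linarith
      have h : (fun w => χ w * φ w) =ᶠ[nhds w] fun _ => 0 := by
        filter_upwards [notMem_tsupport_iff_eventuallyEq.1 hw'] with x hx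
        simp [hx]
      exact contDiffAt_const.congr_of_eventuallyEq h
  · simp [χ.one_of_mem_closedBall (Metric.ball_subset_closedBall hw)]

lemma QE_congr {n : ℕ} {R : ℝ} {φ φ' : E2 → ℝ}
    (h : ∀ w ∈ Metric.ball (0 : E2) R, φ' w = φ w) : QE n R φ' = QE n R φ := by
  refine setIntegral_congr_fun Metric.isOpen_ball.measurableSet fun w hw => ?_
  have : φ' =ᶠ[nhds w] φ := by
    filter_upwards [Metric.isOpen_ball.mem_nhds hw] with x hx using h x hx
  simp only [gradient, this.fderiv_eq, h w hw]

lemma planeIso_circlePoint_mem {R : ℝ} (hR : 1 < R) (θ : ℝ) :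
    planeIso (circlePoint θ) ∈ Metric.ball (0 : E2) R := by
  rwa [mem_ball_zero_iff, LinearIsometryEquiv.norm_map, norm_circlePoint]

lemma continuous_comp_circlePoint {φ : E2 → ℝ} {R : ℝ} (hR : 1 < R)
    (hφ : ContinuousOn φ (Metric.ball 0 R)) :
    Continuous fun θ => φ (planeIso (circlePoint θ)) :=
  hφ.comp_continuous (planeIso.continuous.comp continuous_circlePoint)
    (planeIso_circlePoint_mem hR)

/-- The second variation is nonnegative on functions whose restriction to the unit circle has no
Fourier modes of order at most `5`. -/
lemma QE_five_nonneg {φ : E2 → ℝ} {R : ℝ} (hR : 1 < R)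
    (hφ : ContDiffOn ℝ 1 φ (Metric.ball 0 R))
    (h : ∀ k ∈ Finset.Icc (-5 : ℤ) 5,
      circleCoeff (fun θ => φ (planeIso (circlePoint θ))) k = 0) : 0 ≤ QE 5 R φ := by
  have hlt {R' : ℝ} (h1 : 1 < R') (h2 : R' < R) : 0 ≤ QE 5 R' φ := by
    obtain ⟨φ', hφ', he⟩ := exists_contDiff_eq_on_ball (by linarith) h2 hφ
    rw [← QE_congr he, QE_five_eq_integral_circleEnergy hφ' (by linarith)]
    refine integral_circleEnergy_nonneg (hφ'.comp planeIso.contDiff) h1.le fun k hk => ?_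
    rw [← h k hk]
    congr 1 with θ
    exact he _ (planeIso_circlePoint_mem h1 θ)
  by_cases hi : IntegrableOn (fun w => ‖gradient φ w‖ ^ 2 -
      (8 * ((5 : ℕ) : ℝ) ^ 2 * ‖w‖ ^ (2 * 5 - 2) / (1 + ‖w‖ ^ (2 * 5)) ^ 2) * φ w ^ 2)
      (Metric.ball (0 : E2) R)
  · obtain ⟨u, hu, hu1, hu2⟩ := exists_seq_strictMono_tendsto' hR
    have hU : ⋃ n, Metric.ball (0 : E2) (u n) = Metric.ball 0 R := by
      ext w
      simp only [Set.mem_iUnion, mem_ball_zero_iff]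
      refine ⟨fun ⟨n, hn⟩ => hn.trans (hu1 n).2, fun hw => ?_⟩
      exact (hu2.eventually (lt_mem_nhds hw)).exists
    rw [← hU] at hi
    have ht := tendsto_setIntegral_of_monotone
      (fun n => (Metric.isOpen_ball (x := (0 : E2)) (ε := u n)).measurableSet)
      (fun m n hmn => Metric.ball_subset_ball (hu.monotone hmn)) hi
    rw [hU] at ht
    exact ge_of_tendsto' ht fun n => hlt (hu1 n).1 (hu1 n).2
  · exact (integral_undef hi).ge

lemma finrank_le_eleven {R : ℝ} (hR : 1 < R) (V : Submodule ℝ (E2 → ℝ))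
    (hV : ∀ φ ∈ V, memFE R φ) (hQ : ∀ φ ∈ V, φ ≠ 0 → QE 5 R φ < 0) :
    Module.finrank ℝ V ≤ 11 := by
  have hcont (φ : V) : Continuous fun θ => (φ : E2 → ℝ) (planeIso (circlePoint θ)) :=
    continuous_comp_circlePoint hR (hV φ φ.2).1.continuousOn
  let coeff (k : ℤ) : V →ₗ[ℝ] ℂ :=
    { toFun := fun φ => circleCoeff (fun θ => (φ : E2 → ℝ) (planeIso (circlePoint θ))) k
      map_add' := fun φ φ' => by
        simpa using circleCoeff_linear_combination (hcont φ) (hcont φ') 1 1 k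
      map_smul' := fun a φ => by
        simpa using circleCoeff_linear_combination (hcont φ) (hcont φ) a 0 k }
  let T : V →ₗ[ℝ] ℝ × (Fin 5 → ℂ) :=
    (Complex.reLm.comp (coeff 0)).prod (LinearMap.pi fun j => coeff (j + 1))
  have hT : Function.Injective T := by
    rw [← LinearMap.ker_eq_bot, LinearMap.ker_eq_bot']
    intro φ hφ
    by_contra hne
    have h0 : (coeff 0 φ).re = 0 := congrArg Prod.fst hφ
    have hpos (j : Fin 5) : coeff (j + 1) φ = 0 := congrFun (congrArg Prod.snd hφ) j
    have hconj (k : ℤ) : coeff (-k) φ = starRingEnd ℂ (coeff k φ) := circleCoeff_neg _ k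
    have h00 : coeff 0 φ = 0 := by
      have := hconj 0
      rw [neg_zero, eq_comm, Complex.conj_eq_iff_im] at this
      exact Complex.ext h0 this
    have hnat (k : ℤ) (h1 : 1 ≤ k) (h5 : k ≤ 5) : coeff k φ = 0 := by
      have := hpos ⟨(k - 1).toNat, by omega⟩
      rwa [show (((k - 1).toNat : ℕ) : ℤ) + 1 = k by omega] at this
    refine (hQ φ φ.2 (by simpa using hne)).not_ge
      (QE_five_nonneg hR ((hV φ φ.2).1.of_le (by simp)) fun k hk => ?_)
    rw [Finset.mem_Icc] at hk
    change coeff k φ = 0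
    rcases lt_trichotomy k 0 with hk0 | rfl | hk0
    · rw [← neg_neg k, hconj, hnat (-k) (by omega) (by omega), map_zero]
    · exact h00
    · exact hnat k (by omega) hk.2
  have := LinearMap.finrank_le_finrank_of_injective hT
  simpa [Module.finrank_pi_fintype] using this

lemma integral_circlePoint_pow {k : ℕ} (hk : k ≠ 0) : ∫ θ in -π..π, circlePoint θ ^ k = 0 := by
  have hk' : (k : ℂ) * Complex.I ≠ 0 := mul_ne_zero (by exact_mod_cast hk) Complex.I_ne_zero
  have h (θ : ℝ) : circlePoint θ ^ k = Complex.exp (k * Complex.I * θ) := by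
    rw [circlePoint, ← Complex.exp_nat_mul]
    ring_nf
  simp only [h]
  rw [integral_exp_mul_complex hk', sub_eq_zero.2, zero_div]
  rw [Complex.exp_eq_exp_iff_exists_int]
  exact ⟨k, by push_cast; ring⟩

lemma integral_re_circlePoint_pow {k : ℕ} (hk : k ≠ 0) (z : ℂ) :
    ∫ θ in -π..π, (z * circlePoint θ ^ k).re = 0 := by
  have hc : Continuous fun θ => z * circlePoint θ ^ k := by fun_prop
  have h := intervalIntegral.intervalIntegral_re (hc.intervalIntegrable (μ := volume) (-π) π)
  simp only [intervalIntegral.integral_const_mul, integral_circlePoint_pow hk] at h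
  simpa using h

/-- Square integral over the circle of the trigonometric monomial with coefficient `z`. -/
def modeMass (k : ℕ) (z : ℂ) : ℝ := ∫ θ in -π..π, (z * circlePoint θ ^ k).re ^ 2

lemma re_mul_re_circlePoint_pow (k d : ℕ) (z w : ℂ) (θ : ℝ) :
    (z * circlePoint θ ^ k).re * (w * circlePoint θ ^ (k + d)).re =
      (1 / 2) * ((starRingEnd ℂ z * w * circlePoint θ ^ d).re +
        (z * w * circlePoint θ ^ (2 * k + d)).re) := by
  have h : starRingEnd ℂ (circlePoint θ) * circlePoint θ = 1 := by
    rw [mul_comm, Complex.mul_conj, Complex.normSq_eq_norm_sq, norm_circlePoint]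
    simp
  have h' (a b : ℂ) : a.re * b.re = (1 / 2) * ((starRingEnd ℂ a * b).re + (a * b).re) := by
    simp only [Complex.mul_re, Complex.conj_re, Complex.conj_im]
    ring
  rw [h', map_mul, map_pow]
  congr 3
  · rw [pow_add]
    linear_combination (starRingEnd ℂ z * w * circlePoint θ ^ d) *
      (by rw [← mul_pow, h, one_pow] :
        starRingEnd ℂ (circlePoint θ) ^ k * circlePoint θ ^ k = 1)
  · ring

lemma integral_re_mul_re_circlePoint_pow {k l : ℕ} (hkl : k ≠ l) (z w : ℂ) :
    ∫ θ in -π..π, (z * circlePoint θ ^ k).re * (w * circlePoint θ ^ l).re = 0 := by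
  wlog h : k ≤ l generalizing k l z w
  · simpa only [mul_comm] using this hkl.symm w z (by omega)
  obtain ⟨d, rfl⟩ := Nat.exists_eq_add_of_le h
  simp only [re_mul_re_circlePoint_pow]
  rw [intervalIntegral.integral_const_mul, intervalIntegral.integral_add,
    integral_re_circlePoint_pow (by omega), integral_re_circlePoint_pow (by omega)]
  · simp
  all_goals exact Continuous.intervalIntegrable (by fun_prop) _ _

lemma modeMass_of_ne_zero {k : ℕ} (hk : k ≠ 0) (z : ℂ) : modeMass k z = π * ‖z‖ ^ 2 := by
  have h (θ : ℝ) : (z * circlePoint θ ^ k).re ^ 2 =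
      (1 / 2) * (‖z‖ ^ 2 + (z * z * circlePoint θ ^ (2 * k)).re) := by
    have h := re_mul_re_circlePoint_pow k 0 z z θ
    simp only [add_zero, pow_zero, mul_one, ← Complex.normSq_eq_conj_mul_self,
      Complex.ofReal_re, Complex.normSq_eq_norm_sq] at h
    rw [sq, h]
  simp only [modeMass, h]
  rw [intervalIntegral.integral_const_mul, intervalIntegral.integral_add,
    integral_re_circlePoint_pow (by omega)]
  · simp
    ring
  all_goals exact Continuous.intervalIntegrable (by fun_prop) _ _

lemma modeMass_zero (z : ℂ) : modeMass 0 z = 2 * π * z.re ^ 2 := by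
  simp [modeMass, two_mul]

lemma modeMass_nonneg (k : ℕ) (z : ℂ) : 0 ≤ modeMass k z :=
  intervalIntegral.integral_nonneg neg_pi_lt_pi.le fun _ _ => sq_nonneg _

lemma modeMass_deriv (k : ℕ) (z : ℂ) : modeMass k (k * Complex.I * z) = k ^ 2 * modeMass k z := by
  rcases eq_or_ne k 0 with rfl | hk
  · simp [modeMass_zero]
  · simp only [modeMass_of_ne_zero hk, norm_mul, Complex.norm_natCast, Complex.norm_I]
    ring

lemma modeMass_const_mul (k : ℕ) (x : ℝ) (z : ℂ) : modeMass k (x * z) = x ^ 2 * modeMass k z := by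
  rw [modeMass, modeMass, ← intervalIntegral.integral_const_mul]
  congr 1 with θ
  rw [mul_assoc, Complex.re_ofReal_mul]
  ring

lemma integral_sq_sum_modes {n : ℕ} (z : Fin n → ℂ) :
    ∫ θ in -π..π, (∑ k, (z k * circlePoint θ ^ (k : ℕ)).re) ^ 2 =
      ∑ k : Fin n, modeMass k (z k) := by
  simp only [sq, Finset.sum_mul_sum]
  rw [intervalIntegral.integral_finsetSum fun i _ =>
      Continuous.intervalIntegrable (by fun_prop) _ _]
  refine Finset.sum_congr rfl fun i _ => ?_
  rw [intervalIntegral.integral_finsetSum fun i _ =>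
      Continuous.intervalIntegrable (by fun_prop) _ _,
    Finset.sum_eq_single i]
  · simp only [modeMass, sq]
  · intro j _ hj
    exact integral_re_mul_re_circlePoint_pow (by rwa [Ne, Fin.val_inj, eq_comm]) _ _
  · simp

/-- The exponent of the radial factor of the test function with angular frequency `k`. -/
def testExponent (k : ℕ) : ℕ := k + 2 * ((5 - k) / 2)

/-- The radial factor of the test function with angular frequency `k`. -/
def testRadial (k : ℕ) (r : ℝ) : ℝ := r ^ testExponent k / (1 + r ^ 10)

/-- The linear combination of test functions with angular frequencies at most `5` and
coefficients `z`. -/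
def testFunction (z : Fin 6 → ℂ) (w : ℂ) : ℝ :=
  ∑ k : Fin 6, (z k * w ^ (k : ℕ)).re * Complex.normSq w ^ ((5 - k : ℕ) / 2) /
    (1 + Complex.normSq w ^ 5)

/-- Radial logarithmic derivative of the radial Jacobi function `r ^ 5 / (1 + r ^ 10)` with
angular frequency `5`. -/
def nullRatio (r : ℝ) : ℝ := 5 * (1 - r ^ 10) / (1 + r ^ 10)

lemma one_add_pow_ten_pos (r : ℝ) : 0 < 1 + r ^ 10 := by
  have : 0 ≤ r ^ 10 := Even.pow_nonneg (by decide) r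
  positivity

lemma testFunction_polar (z : Fin 6 → ℂ) (r θ : ℝ) :
    testFunction z (r * circlePoint θ) =
      ∑ k : Fin 6, ((testRadial k r : ℂ) * z k * circlePoint θ ^ (k : ℕ)).re := by
  refine Finset.sum_congr rfl fun k _ => ?_
  have hn : Complex.normSq (r * circlePoint θ) = r ^ 2 := by
    rw [Complex.normSq_eq_norm_sq, norm_mul, norm_circlePoint, mul_one, Complex.norm_real,
      norm_eq_abs, sq_abs]
  have h : z k * (r * circlePoint θ) ^ (k : ℕ) =
      ((r ^ (k : ℕ) : ℝ) : ℂ) * (z k * circlePoint θ ^ (k : ℕ)) := by push_cast; ring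
  rw [hn, h, Complex.re_ofReal_mul, mul_assoc (testRadial k r : ℂ), Complex.re_ofReal_mul,
    testRadial, testExponent]
  ring

lemma contDiff_testFunction (z : Fin 6 → ℂ) {n : ℕ∞} : ContDiff ℝ n (testFunction z) := by
  have h1 : ContDiff ℝ n (fun w : ℂ => Complex.normSq w) := by
    have : (fun w : ℂ => Complex.normSq w) = fun w => ‖w‖ ^ 2 :=
      funext Complex.normSq_eq_norm_sq
    rw [this]
    exact contDiff_id.norm_sq ℝ
  refine ContDiff.sum fun k _ => ContDiff.div (ContDiff.mul ?_ (h1.pow _))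
    (contDiff_const.add (h1.pow _)) fun w => ?_
  · exact Complex.reCLM.contDiff.comp (contDiff_const.mul (contDiff_id.pow _))
  · have := Complex.normSq_nonneg w
    positivity

/-- Radial derivative of the radial factor `testRadial k`. -/
def testRadialDeriv (k : ℕ) (r : ℝ) : ℝ :=
  testRadial k r * (testExponent k - 10 * (r ^ 10 / (1 + r ^ 10))) / r

lemma hasDerivAt_testRadial (k : ℕ) {r : ℝ} (hr : 0 < r) :
    HasDerivAt (testRadial k) (testRadialDeriv k r) r := by
  have hp := one_add_pow_ten_pos r
  refine ((hasDerivAt_pow (testExponent k) r).fun_div ((hasDerivAt_pow 10 r).const_add 1)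
    hp.ne').congr_deriv ?_
  have : testExponent k ≠ 0 := by unfold testExponent; omega
  obtain ⟨m, hm⟩ := Nat.exists_eq_succ_of_ne_zero this
  rw [testRadialDeriv, testRadial, hm]
  simp only [Nat.succ_eq_add_one, Nat.add_sub_cancel]
  field_simp
  push_cast
  ring

lemma hasDerivAt_nullRatio {r : ℝ} (hr : 0 < r) :
    HasDerivAt nullRatio (-100 * r ^ 10 / (1 + r ^ 10) ^ 2 / r) r := by
  have hp := one_add_pow_ten_pos r
  refine ((((hasDerivAt_pow 10 r).const_sub 1).const_mul 5).fun_div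
    ((hasDerivAt_pow 10 r).const_add 1) hp.ne').congr_deriv ?_
  field_simp
  ring

/-- Derivative of the boundary term in the energy of the test function with frequency `k`. -/
def testFluxDeriv (k : ℕ) (r : ℝ) : ℝ :=
  -100 * r ^ 10 / (1 + r ^ 10) ^ 2 / r * testRadial k r ^ 2 + nullRatio r *
    (2 * testRadial k r * testRadialDeriv k r)

lemma hasDerivAt_testFlux (k : ℕ) {r : ℝ} (hr : 0 < r) :
    HasDerivAt (fun r => nullRatio r * testRadial k r ^ 2) (testFluxDeriv k r) r := by
  refine ((hasDerivAt_nullRatio hr).fun_mul ((hasDerivAt_testRadial k hr).fun_pow 2)).congr_deriv ?_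
  simp [testFluxDeriv]

lemma testEnergy_le (k : Fin 6) {r : ℝ} (hr : 0 < r) :
    r * (testRadialDeriv k r ^ 2 + (k * testRadial k r / r) ^ 2 -
      potential r * testRadial k r ^ 2) ≤ testFluxDeriv k r := by
  have hp := one_add_pow_ten_pos r
  have hk : (testExponent k : ℝ) ^ 2 - 10 * testExponent k + (k : ℝ) ^ 2 ≤ 0 := by
    fin_cases k <;> norm_num [testExponent]
  have hs : 0 ≤ testRadial k r ^ 2 / r := by positivity
  unfold testFluxDeriv testRadialDeriv nullRatio potential
  generalize testRadial k r = f at *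
  generalize (testExponent k : ℝ) = m at *
  rw [← sub_nonneg]
  refine (mul_nonneg (neg_nonneg.2 hk) hs).trans_eq ?_
  field_simp
  ring

lemma fderiv_testFunction_radial (z : Fin 6 → ℂ) {r : ℝ} (hr : 0 < r) (θ : ℝ) :
    fderiv ℝ (testFunction z) (r * circlePoint θ) (circlePoint θ) =
      ∑ k : Fin 6, ((testRadialDeriv k r : ℂ) * z k * circlePoint θ ^ (k : ℕ)).re := by
  have hd : DifferentiableAt ℝ (testFunction z) (r * circlePoint θ) :=
    ((contDiff_testFunction z (n := 1)).differentiable one_ne_zero).differentiableAt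
  have hc : HasDerivAt (fun r : ℝ => (r : ℂ) * circlePoint θ) (circlePoint θ) r := by
    simpa using (Complex.ofRealCLM.hasDerivAt (x := r)).mul_const (circlePoint θ)
  refine (hd.hasFDerivAt.comp_hasDerivAt r hc).unique ?_
  have : testFunction z ∘ (fun r : ℝ => (r : ℂ) * circlePoint θ) = fun r : ℝ =>
      ∑ k : Fin 6, testRadial k r * (z k * circlePoint θ ^ (k : ℕ)).re := by
    funext r
    simp only [Function.comp_apply, testFunction_polar, mul_assoc, Complex.re_ofReal_mul]
  rw [this]
  simp only [mul_assoc, Complex.re_ofReal_mul]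
  exact HasDerivAt.fun_sum fun k _ => (hasDerivAt_testRadial k hr).mul_const _

lemma fderiv_testFunction_angular (z : Fin 6 → ℂ) {r : ℝ} (hr : 0 < r) (θ : ℝ) :
    fderiv ℝ (testFunction z) (r * circlePoint θ) (Complex.I * circlePoint θ) =
      ∑ k : Fin 6, (((testRadial k r / r : ℝ) : ℂ) * ((k : ℕ) * Complex.I * z k) *
        circlePoint θ ^ (k : ℕ)).re := by
  have hd : DifferentiableAt ℝ (testFunction z) (r * circlePoint θ) :=
    ((contDiff_testFunction z (n := 1)).differentiable one_ne_zero).differentiableAt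
  have hc : HasDerivAt (fun θ : ℝ => (r : ℂ) * circlePoint θ)
      (r • (Complex.I * circlePoint θ)) θ := by
    rw [Complex.real_smul]
    exact (hasDerivAt_circlePoint θ).const_mul _
  have h1 := hd.hasFDerivAt.comp_hasDerivAt θ hc
  have h2 : HasDerivAt (testFunction z ∘ fun θ : ℝ => (r : ℂ) * circlePoint θ)
      (∑ k : Fin 6, ((testRadial k r : ℂ) * ((k : ℕ) * Complex.I * z k) *
        circlePoint θ ^ (k : ℕ)).re) θ := by
    have : testFunction z ∘ (fun θ : ℝ => (r : ℂ) * circlePoint θ) = fun θ : ℝ =>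
        ∑ k : Fin 6, ((testRadial k r : ℂ) * z k * circlePoint θ ^ (k : ℕ)).re := by
      funext θ
      exact testFunction_polar z r θ
    rw [this]
    refine HasDerivAt.fun_sum fun k _ => ?_
    have h := ((hasDerivAt_circlePoint θ).fun_pow (k : ℕ)).const_mul
      ((testRadial k r : ℂ) * z k)
    refine (Complex.reCLM.hasFDerivAt.comp_hasDerivAt θ h).congr_deriv ?_
    rw [Complex.reCLM_apply]
    congr 1
    rcases eq_or_ne (k : ℕ) 0 with hk | hk
    · simp [hk]
    · rw [← pow_sub_one_mul hk (circlePoint θ)]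
      ring
  have h3 := h1.unique h2
  rw [map_smul, smul_eq_mul] at h3
  rw [← mul_right_inj' hr.ne', h3, Finset.mul_sum]
  refine Finset.sum_congr rfl fun k _ => ?_
  rw [← Complex.re_ofReal_mul]
  congr 1
  have hr' : (r : ℂ) ≠ 0 := by exact_mod_cast hr.ne'
  push_cast
  field_simp

lemma circleEnergy_testFunction_le (z : Fin 6 → ℂ) {r : ℝ} (hr : 0 < r) :
    circleEnergy (testFunction z) r ≤ ∑ k : Fin 6, modeMass k (z k) * testFluxDeriv k r := by
  have h : circleEnergy (testFunction z) r = ∑ k : Fin 6, modeMass k (z k) *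
      (r * (testRadialDeriv k r ^ 2 + (k * testRadial k r / r) ^ 2 -
        potential r * testRadial k r ^ 2)) := by
    simp only [circleEnergy, fderiv_testFunction_radial z hr, fderiv_testFunction_angular z hr,
      testFunction_polar]
    rw [intervalIntegral.integral_const_mul, intervalIntegral.integral_sub,
      intervalIntegral.integral_add, intervalIntegral.integral_const_mul]
    · simp only [integral_sq_sum_modes (fun k : Fin 6 => (testRadialDeriv k r : ℂ) * z k),
        integral_sq_sum_modes (fun k : Fin 6 => (testRadial k r : ℂ) * z k),
        integral_sq_sum_modes (fun k : Fin 6 =>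
          ((testRadial k r / r : ℝ) : ℂ) * ((k : ℕ) * Complex.I * z k)),
        modeMass_const_mul, modeMass_deriv, Finset.mul_sum, ← Finset.sum_add_distrib,
        ← Finset.sum_sub_distrib]
      refine Finset.sum_congr rfl fun k _ => ?_
      ring
    all_goals exact Continuous.intervalIntegrable (by fun_prop) _ _
  rw [h]
  exact Finset.sum_le_sum fun k _ =>
    mul_le_mul_of_nonneg_left (testEnergy_le k hr) (modeMass_nonneg _ _)

lemma integral_circleEnergy_testFunction_le (z : Fin 6 → ℂ) {R : ℝ} (hR : 0 < R) :
    ∫ r in 0..R, circleEnergy (testFunction z) r ≤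
      ∑ k : Fin 6, modeMass k (z k) * (nullRatio R * testRadial k R ^ 2) := by
  have hcont (k : ℕ) : Continuous fun r => nullRatio r * testRadial k r ^ 2 := by
    unfold nullRatio testRadial
    have (r : ℝ) : 1 + r ^ 10 ≠ 0 := (one_add_pow_ten_pos r).ne'
    fun_prop (disch := assumption)
  have hzero (k : Fin 6) : testRadial k 0 = 0 := by
    have : testExponent k ≠ 0 := by unfold testExponent; omega
    simp [testRadial, this]
  have hψ := continuous_circleEnergy (contDiff_testFunction z (n := 1))
  refine (intervalIntegral.integral_le_sub_of_hasDeriv_right_of_le hR.le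
    (g := fun r => ∑ k : Fin 6, modeMass k (z k) * (nullRatio r * testRadial k r ^ 2))
    (g' := fun r => ∑ k : Fin 6, modeMass k (z k) * testFluxDeriv k r)
    (continuous_finsetSum _ fun (k : Fin 6) _ =>
      (hcont k).const_mul (modeMass k (z k))).continuousOn
    (fun r hr => (HasDerivAt.fun_sum fun (k : Fin 6) _ =>
      (hasDerivAt_testFlux k hr.1).const_mul (modeMass k (z k))).hasDerivWithinAt)
    (hψ.integrableOn_Icc) fun r hr => circleEnergy_testFunction_le z hr.1).trans_eq ?_
  simp [hzero]

lemma QE_five_testFunction_neg {z : Fin 6 → ℂ} (hz : z ≠ 0) (hz0 : (z 0).im = 0) {R : ℝ}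
    (hR : 1 < R) : QE 5 R (testFunction z ∘ planeIso.symm) < 0 := by
  have hR0 : 0 < R := one_pos.trans hR
  have hψ : (testFunction z ∘ planeIso.symm) ∘ planeIso = testFunction z := by
    ext w
    simp
  rw [QE_five_eq_integral_circleEnergy
    ((contDiff_testFunction z).comp planeIso.symm.contDiff) hR0, hψ]
  refine (integral_circleEnergy_testFunction_le z hR0).trans_lt ?_
  have hneg (k : ℕ) : nullRatio R * testRadial k R ^ 2 < 0 := by
    have h1 : nullRatio R < 0 := by
      have : 1 < R ^ 10 := one_lt_pow₀ hR (by norm_num)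
      exact div_neg_of_neg_of_pos (by linarith) (one_add_pow_ten_pos R)
    have h2 : 0 < testRadial k R := div_pos (by positivity) (one_add_pow_ten_pos R)
    exact mul_neg_of_neg_of_pos h1 (by positivity)
  obtain ⟨k, hk⟩ := Function.ne_iff.1 hz
  have hmass : 0 < modeMass k (z k) := by
    rcases eq_or_ne k 0 with rfl | hk0
    · have : (z 0).re ≠ 0 := fun h => hk (Complex.ext h hz0)
      rw [Fin.val_zero, modeMass_zero]
      positivity
    · rw [modeMass_of_ne_zero (by rwa [Ne, Fin.val_eq_zero_iff])]
      have : 0 < ‖z k‖ := norm_pos_iff.2 hk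
      positivity
  exact Finset.sum_neg' (fun j _ => mul_nonpos_of_nonneg_of_nonpos (modeMass_nonneg _ _)
    (hneg j).le) ⟨k, Finset.mem_univ _, mul_neg_of_pos_of_neg hmass (hneg k)⟩

/-- The coefficients of a test function with real constant mode, as a linear function of the
parameters. -/
def testCoeff : ℝ × (Fin 5 → ℂ) →ₗ[ℝ] (Fin 6 → ℂ) where
  toFun p := Fin.cons (p.1 : ℂ) p.2
  map_add' p q := by
    ext k
    refine Fin.cases ?_ (fun i => ?_) k <;> simp
  map_smul' c p := by
    ext k
    refine Fin.cases ?_ (fun i => ?_) k <;> simp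

lemma testCoeff_injective : Function.Injective testCoeff := by
  intro p q h
  obtain ⟨h0, h1⟩ := Fin.cons_injective2 (α := fun _ => ℂ) h
  exact Prod.ext (Complex.ofReal_injective h0) h1

/-- The test functions on the plane as a linear function of the parameters. -/
def testMap : ℝ × (Fin 5 → ℂ) →ₗ[ℝ] (E2 → ℝ) where
  toFun p := testFunction (testCoeff p) ∘ planeIso.symm
  map_add' p q := by
    ext w
    simp only [Function.comp_apply, Pi.add_apply, testFunction, map_add,
      ← Finset.sum_add_distrib]
    refine Finset.sum_congr rfl fun k _ => ?_
    rw [add_mul, Complex.add_re]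
    ring
  map_smul' c p := by
    ext w
    simp only [Function.comp_apply, Pi.smul_apply, testFunction, map_smul, smul_eq_mul,
      Finset.mul_sum, RingHom.id_apply, smul_mul_assoc, Complex.smul_re]
    refine Finset.sum_congr rfl fun k _ => ?_
    ring

lemma QE_five_testMap_neg {p : ℝ × (Fin 5 → ℂ)} (hp : p ≠ 0) {R : ℝ} (hR : 1 < R) :
    QE 5 R (testMap p) < 0 := by
  refine QE_five_testFunction_neg ?_ ?_ hR
  · rwa [Ne, LinearMap.map_eq_zero_iff _ testCoeff_injective]
  · simp [testCoeff]

lemma testMap_injective : Function.Injective testMap := by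
  rw [← LinearMap.ker_eq_bot, LinearMap.ker_eq_bot']
  intro p hp
  by_contra h
  have := QE_five_testMap_neg h one_lt_two
  rw [hp] at this
  simp [QE, gradient] at this

lemma ContDiff.memFE {φ : E2 → ℝ} (hφ : ContDiff ℝ (⊤ : ℕ∞) φ) (R : ℝ) : memFE R φ := by
  refine ⟨hφ.contDiffOn, fun i _ => ?_⟩
  have hc : Continuous (iteratedFDeriv ℝ i φ) :=
    hφ.continuous_iteratedFDeriv (by exact_mod_cast le_top)
  obtain ⟨C, hC⟩ := (isCompact_closedBall (0 : E2) R).exists_bound_of_continuousOn hc.continuousOn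
  refine ⟨C, fun w hw => ?_⟩
  rw [iteratedFDerivWithin_of_isOpen i Metric.isOpen_ball hw]
  exact hC w (Metric.ball_subset_closedBall hw)

/-- the modified (bounded-perturbation) index of the complete dihedral
Enneper surface of order 5 equals 11: `ind_b(Σ₁⁵(R)) = 11` for all sufficiently large
radii `R`, i.e. `ind_b(Σ₁⁵) = lim_{R→∞} ind_b(Σ₁⁵(R)) = 11`. -/
theorem enneper5_indb_eq_eleven :
    ∃ R₀ : ℝ, 0 < R₀ ∧ ∀ R : ℝ, R₀ ≤ R → indbE 5 R = 11 := by
  refine ⟨2, two_pos, fun R hR => le_antisymm (sSup_le ?_) (le_sSup ?_)⟩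
  · rintro d ⟨V, -, hV, hQ, rfl⟩
    exact_mod_cast finrank_le_eleven (one_lt_two.trans_le hR) V hV hQ
  · refine ⟨LinearMap.range testMap, inferInstance, ?_, ?_, ?_⟩
    · rintro _ ⟨p, rfl⟩
      exact ((contDiff_testFunction _).comp planeIso.symm.contDiff).memFE R
    · rintro _ ⟨p, rfl⟩ hp
      exact QE_five_testMap_neg (fun h => hp (by rw [h, map_zero])) (one_lt_two.trans_le hR)
    · rw [LinearMap.finrank_range_of_inj testMap_injective, Module.finrank_prod,
        Module.finrank_self, Module.finrank_pi_fintype]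
      simp [Complex.finrank_real_complex]
end
end

section
/- If in addition σ is minimal, i.e., g₂₂h₁₁ − 2g₁₂h₁₂ + g₁₁h₂₂ = 0 on Ω, then the function A(t) = ∫_Ω √(det g_t) du dv is twice differentiable at t = 0 with A'(0) = 0 and A''(0) = ∫_Ω (Σ_{i,j=1,2} g^{ij} ∂_iφ ∂_jφ + 2κφ²)·√(det g) du dv. -/
noncomputable section
open MeasureTheory Real

/-- Dot product on `ℝ³ = ℝ × ℝ × ℝ`. -/
def dot3 (a b : ℝ × ℝ × ℝ) : ℝ := a.1 * b.1 + a.2.1 * b.2.1 + a.2.2 * b.2.2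

/-- Cross product on `ℝ³ = ℝ × ℝ × ℝ`. -/
def cross3 (a b : ℝ × ℝ × ℝ) : ℝ × ℝ × ℝ :=
  (a.2.1 * b.2.2 - a.2.2 * b.2.1, a.2.2 * b.1 - a.1 * b.2.2, a.1 * b.2.1 - a.2.1 * b.1)

/-- Euclidean norm on `ℝ³ = ℝ × ℝ × ℝ`. -/
def norm3 (a : ℝ × ℝ × ℝ) : ℝ := Real.sqrt (dot3 a a)

/-- Partial derivative in the first (`u`) variable. -/
def pdU {E : Type*} [NormedAddCommGroup E] [NormedSpace ℝ E] (f : ℝ × ℝ → E) (p : ℝ × ℝ) : E :=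
  deriv (fun x => f (x, p.2)) p.1

/-- Partial derivative in the second (`v`) variable. -/
def pdV {E : Type*} [NormedAddCommGroup E] [NormedSpace ℝ E] (f : ℝ × ℝ → E) (p : ℝ × ℝ) : E :=
  deriv (fun y => f (p.1, y)) p.2

/-- The unit normal `N = (σ_u × σ_v)/‖σ_u × σ_v‖` of a parametrized surface `σ`. -/
def unitNormal (σ : ℝ × ℝ → ℝ × ℝ × ℝ) (p : ℝ × ℝ) : ℝ × ℝ × ℝ :=
  (norm3 (cross3 (pdU σ p) (pdV σ p)))⁻¹ • cross3 (pdU σ p) (pdV σ p)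

/-- The normal variation `σ_t = σ + tφN`. -/
def normalVariation (σ : ℝ × ℝ → ℝ × ℝ × ℝ) (φ : ℝ × ℝ → ℝ) (t : ℝ) (p : ℝ × ℝ) :
    ℝ × ℝ × ℝ :=
  σ p + (t * φ p) • unitNormal σ p

/-- The determinant `det g = g₁₁g₂₂ − g₁₂²` of the first fundamental form of a
parametrized surface `f`. -/
def gdet (f : ℝ × ℝ → ℝ × ℝ × ℝ) (p : ℝ × ℝ) : ℝ :=
  dot3 (pdU f p) (pdU f p) * dot3 (pdV f p) (pdV f p) - (dot3 (pdU f p) (pdV f p)) ^ 2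

/-- Twice differentiating the integral of the square root of a bounded quartic family. -/
theorem hasDerivAt_integral_sqrt_quartic {α : Type*} [MeasurableSpace α] {μ : Measure α}
    [IsFiniteMeasure μ] {c₀ c₂ c₃ c₄ : α → ℝ} {m M : ℝ} (hm : 0 < m)
    (h₀ : AEMeasurable c₀ μ) (h₂ : AEMeasurable c₂ μ) (h₃ : AEMeasurable c₃ μ)
    (h₄ : AEMeasurable c₄ μ) (hc₀ : ∀ᵐ x ∂μ, m ≤ c₀ x ∧ c₀ x ≤ M) (hc₂ : ∀ᵐ x ∂μ, |c₂ x| ≤ M)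
    (hc₃ : ∀ᵐ x ∂μ, |c₃ x| ≤ M) (hc₄ : ∀ᵐ x ∂μ, |c₄ x| ≤ M) :
    HasDerivAt (fun t => ∫ x, √(c₀ x + c₂ x * t ^ 2 + c₃ x * t ^ 3 + c₄ x * t ^ 4) ∂μ) 0 0 ∧
    HasDerivAt (deriv fun t => ∫ x, √(c₀ x + c₂ x * t ^ 2 + c₃ x * t ^ 3 + c₄ x * t ^ 4) ∂μ)
      (∫ x, c₂ x / √(c₀ x) ∂μ) 0 := by
  set P : ℝ → α → ℝ := fun t x => c₀ x + c₂ x * t ^ 2 + c₃ x * t ^ 3 + c₄ x * t ^ 4 with hP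
  set P' : ℝ → α → ℝ := fun t x => 2 * c₂ x * t + 3 * c₃ x * t ^ 2 + 4 * c₄ x * t ^ 3 with hP'
  set P'' : ℝ → α → ℝ := fun t x => 2 * c₂ x + 6 * c₃ x * t + 12 * c₄ x * t ^ 2 with hP''
  set K : ℝ := max M 1
  have hK : 1 ≤ K := le_max_right _ _
  have hMK : M ≤ K := le_max_left _ _
  set δ : ℝ := min 1 (m / (6 * K)) with hδ
  have hδ0 : 0 < δ := by positivity
  have hδ1 : δ ≤ 1 := min_le_left _ _
  have hδm : 3 * K * δ ≤ m / 2 := by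
    have : δ ≤ m / (6 * K) := min_le_right _ _
    rw [le_div_iff₀ (by positivity)] at this
    linarith
  set s : ℝ := √(m / 2) with hs
  have hs0 : 0 < s := by positivity
  have hdP (t x) : HasDerivAt (fun t => P t x) (P' t x) t := by
    have := ((((hasDerivAt_id t).pow 2).const_mul (c₂ x)).add
      (((hasDerivAt_id t).pow 3).const_mul (c₃ x))).add
      (((hasDerivAt_id t).pow 4).const_mul (c₄ x))
    refine (this.const_add (c₀ x)).congr_deriv ?_ |>.congr_of_eventuallyEq ?_
    · simp [hP']; ring
    · exact .of_forall fun t => by simp [hP]; ring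
  have hdP' (t x) : HasDerivAt (fun t => P' t x) (P'' t x) t := by
    have := (((hasDerivAt_id t).const_mul (2 * c₂ x)).add
      (((hasDerivAt_id t).pow 2).const_mul (3 * c₃ x))).add
      (((hasDerivAt_id t).pow 3).const_mul (4 * c₄ x))
    refine this.congr_deriv ?_ |>.congr_of_eventuallyEq ?_
    · simp [hP'']; ring
    · exact .of_forall fun t => by simp [hP']
  have key : ∀ᵐ x ∂μ, ∀ t ∈ Metric.ball (0 : ℝ) δ,
      m / 2 ≤ P t x ∧ P t x ≤ 4 * K ∧ |P' t x| ≤ 9 * K ∧ |P'' t x| ≤ 20 * K := by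
    filter_upwards [hc₀, hc₂, hc₃, hc₄] with x h0 h2 h3 h4 t ht
    rw [mem_ball_zero_iff, Real.norm_eq_abs] at ht
    have ht1 : |t| ≤ 1 := by linarith
    have ha := abs_nonneg t
    have hp2 : |t| ^ 2 ≤ |t| := by nlinarith
    have hp3 : |t| ^ 3 ≤ |t| := pow_le_of_le_one ha ht1 (by norm_num)
    have hp4 : |t| ^ 4 ≤ |t| := pow_le_of_le_one ha ht1 (by norm_num)
    have b (c : ℝ) (hc : |c| ≤ M) (k : ℕ) (hk : |t| ^ k ≤ |t|) : |c * t ^ k| ≤ K * |t| := by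
      rw [abs_mul, abs_pow]; gcongr; linarith
    have b2 := abs_le.1 (b _ h2 2 hp2)
    have b3 := abs_le.1 (b _ h3 3 hp3)
    have b4 := abs_le.1 (b _ h4 4 hp4)
    have d2 := abs_le.1 (b _ h2 1 (by simp))
    have d3 := abs_le.1 (b _ h3 2 hp2)
    have d4 := abs_le.1 (b _ h4 3 hp3)
    have e3 := abs_le.1 (b _ h3 1 (by simp))
    have e4 := abs_le.1 (b _ h4 2 hp2)
    have g2 := abs_le.1 h2
    have hKt : K * |t| ≤ K * δ := by gcongr
    have hKt1 : K * |t| ≤ K := by nlinarith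
    refine ⟨?_, ?_, abs_le.2 ⟨?_, ?_⟩, abs_le.2 ⟨?_, ?_⟩⟩ <;> simp only [hP, hP', hP''] <;> linarith
  have hmem0 : (0 : ℝ) ∈ Metric.ball (0 : ℝ) δ := Metric.mem_ball_self hδ0
  have hsqrt {t x} (h : m / 2 ≤ P t x) : s ≤ √(P t x) := Real.sqrt_le_sqrt h
  have mP (t) : AEMeasurable (P t) μ := by simp only [hP]; fun_prop
  have mP' (t) : AEMeasurable (P' t) μ := by simp only [hP']; fun_prop
  have mP'' (t) : AEMeasurable (P'' t) μ := by simp only [hP'']; fun_prop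
  set G : ℝ → α → ℝ := fun t x => P' t x / (2 * √(P t x)) with hG
  set G' : ℝ → α → ℝ := fun t x =>
    (P'' t x * (2 * √(P t x)) - P' t x * (2 * G t x)) / (2 * √(P t x)) ^ 2 with hG'
  have mF (t) : AEStronglyMeasurable (fun x => √(P t x)) μ :=
    (mP t).sqrt.aestronglyMeasurable
  have mG (t) : AEStronglyMeasurable (G t) μ :=
    ((mP' t).div ((mP t).sqrt.const_mul 2)).aestronglyMeasurable
  have mG' (t) : AEStronglyMeasurable (G' t) μ :=
    ((((mP'' t).mul ((mP t).sqrt.const_mul 2)).sub ((mP' t).mul ((mG t).aemeasurable.const_mul 2))).div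
      (((mP t).sqrt.const_mul 2).pow_const 2)).aestronglyMeasurable
  have bG : ∀ᵐ x ∂μ, ∀ t ∈ Metric.ball (0 : ℝ) δ, ‖G t x‖ ≤ 9 * K / (2 * s) := by
    filter_upwards [key] with x hx t ht
    obtain ⟨h1, -, h3, -⟩ := hx t ht
    have := hsqrt h1
    rw [hG, Real.norm_eq_abs, abs_div, abs_of_pos (a := 2 * √(P t x)) (by linarith)]
    gcongr
  have bG' : ∀ᵐ x ∂μ, ∀ t ∈ Metric.ball (0 : ℝ) δ,
      ‖G' t x‖ ≤ (20 * K * (2 * √(4 * K)) + 9 * K * (2 * (9 * K / (2 * s)))) / (2 * s) ^ 2 := by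
    filter_upwards [key, bG] with x hx hbG t ht
    obtain ⟨h1, h2, h3, h4⟩ := hx t ht
    have h5 := hbG t ht
    rw [Real.norm_eq_abs] at h5
    have := hsqrt h1
    rw [hG', Real.norm_eq_abs, abs_div, abs_of_nonneg (a := (2 * √(P t x)) ^ 2) (by positivity)]
    gcongr
    refine (abs_sub _ _).trans (add_le_add ?_ ?_)
    · rw [abs_mul, abs_of_nonneg (a := 2 * √(P t x)) (by positivity)]; gcongr
    · rw [abs_mul, abs_mul, abs_two]; gcongr
  have dF : ∀ᵐ x ∂μ, ∀ t ∈ Metric.ball (0 : ℝ) δ,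
      HasDerivAt (fun t => √(P t x)) (G t x) t := by
    filter_upwards [key] with x hx t ht
    exact (hdP t x).sqrt (by have := (hx t ht).1; linarith)
  have dG : ∀ᵐ x ∂μ, ∀ t ∈ Metric.ball (0 : ℝ) δ,
      HasDerivAt (fun t => G t x) (G' t x) t := by
    filter_upwards [key, dF] with x hx hd t ht
    refine (hdP' t x).div ((hd t ht).const_mul 2) ?_
    have := hsqrt (hx t ht).1
    exact (by linarith : 0 < 2 * √(P t x)).ne'
  have iF (t) (ht : t ∈ Metric.ball (0 : ℝ) δ) : Integrable (fun x => √(P t x)) μ := by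
    refine .of_bound (mF t) (√(4 * K)) ?_
    filter_upwards [key] with x hx
    rw [Real.norm_eq_abs, abs_of_nonneg (by positivity)]
    exact Real.sqrt_le_sqrt (hx t ht).2.1
  have dA (t) (ht : t ∈ Metric.ball (0 : ℝ) δ) :
      HasDerivAt (fun t => ∫ x, √(P t x) ∂μ) (∫ x, G t x ∂μ) t :=
    (hasDerivAt_integral_of_dominated_loc_of_deriv_le (Metric.isOpen_ball.mem_nhds ht)
      (.of_forall mF) (iF t ht) (mG t) bG (integrable_const _) dF).2
  have dB : HasDerivAt (fun t => ∫ x, G t x ∂μ) (∫ x, G' 0 x ∂μ) 0 :=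
    (hasDerivAt_integral_of_dominated_loc_of_deriv_le (Metric.isOpen_ball.mem_nhds hmem0)
      (.of_forall mG) (.of_bound (mG 0) _ (bG.mono fun x hx => hx 0 hmem0)) (mG' 0) bG'
      (integrable_const _) dG).2
  refine ⟨(dA 0 hmem0).congr_deriv (by simp [hG, hP']), ?_⟩
  refine (dB.congr_of_eventuallyEq ?_).congr_deriv (integral_congr_ae ?_)
  · filter_upwards [Metric.isOpen_ball.mem_nhds hmem0] with t ht using (dA t ht).deriv
  · filter_upwards [hc₀] with x hx
    have : 0 < √(c₀ x) := Real.sqrt_pos.2 (by linarith [hx.1])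
    simp only [hG', hG, hP, hP', hP'']
    field_simp
    simp
    field_simp

section SmoothOn

variable {E F : Type*} [NormedAddCommGroup E] [NormedSpace ℝ E] [NormedAddCommGroup F]
  [NormedSpace ℝ F] {f : F → E} {p : F} {Ω : Set F}

theorem ContDiffOn.differentiableAt_of_isOpen (hf : ContDiffOn ℝ (⊤ : ℕ∞) f Ω) (hΩ : IsOpen Ω)
    (hp : p ∈ Ω) : DifferentiableAt ℝ f p :=
  (hf.contDiffAt (hΩ.mem_nhds hp)).differentiableAt (by simp)

theorem ContDiffOn.contDiffOn_fderiv (hf : ContDiffOn ℝ (⊤ : ℕ∞) f Ω) (hΩ : IsOpen Ω) :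
    ContDiffOn ℝ (⊤ : ℕ∞) (fderiv ℝ f) Ω :=
  hf.fderiv_of_isOpen hΩ (by norm_cast)

end SmoothOn

section PartialDerivatives

variable {E : Type*} [NormedAddCommGroup E] [NormedSpace ℝ E] {f g : ℝ × ℝ → E} {p : ℝ × ℝ}
  {Ω : Set (ℝ × ℝ)}

theorem DifferentiableAt.hasDerivAt_pdU (hf : DifferentiableAt ℝ f p) :
    HasDerivAt (fun x => f (x, p.2)) (pdU f p) p.1 := by
  have h : DifferentiableAt ℝ (fun x : ℝ => f (x, p.2)) p.1 :=
    DifferentiableAt.comp (g := f) (f := fun x : ℝ => (x, p.2)) p.1 hf (by fun_prop)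
  exact h.hasDerivAt

theorem DifferentiableAt.hasDerivAt_pdV (hf : DifferentiableAt ℝ f p) :
    HasDerivAt (fun y => f (p.1, y)) (pdV f p) p.2 := by
  have h : DifferentiableAt ℝ (fun y : ℝ => f (p.1, y)) p.2 :=
    DifferentiableAt.comp (g := f) (f := fun y : ℝ => (p.1, y)) p.2 hf (by fun_prop)
  exact h.hasDerivAt

theorem DifferentiableAt.pdU_eq_fderiv (hf : DifferentiableAt ℝ f p) :
    pdU f p = fderiv ℝ f p (1, 0) :=
  (HasFDerivAt.comp_hasDerivAt (f := fun x : ℝ => (x, p.2)) p.1 hf.hasFDerivAt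
    ((hasDerivAt_id p.1).prodMk (hasDerivAt_const p.1 p.2))).deriv

theorem DifferentiableAt.pdV_eq_fderiv (hf : DifferentiableAt ℝ f p) :
    pdV f p = fderiv ℝ f p (0, 1) :=
  (HasFDerivAt.comp_hasDerivAt (f := fun y : ℝ => (p.1, y)) p.2 hf.hasFDerivAt
    ((hasDerivAt_const p.2 p.1).prodMk (hasDerivAt_id p.2))).deriv

theorem ContDiffOn.contDiffOn_pdU (hf : ContDiffOn ℝ (⊤ : ℕ∞) f Ω) (hΩ : IsOpen Ω) :
    ContDiffOn ℝ (⊤ : ℕ∞) (pdU f) Ω :=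
  ((hf.contDiffOn_fderiv hΩ).clm_apply contDiffOn_const).congr fun _ hp =>
    (hf.differentiableAt_of_isOpen hΩ hp).pdU_eq_fderiv

theorem ContDiffOn.contDiffOn_pdV (hf : ContDiffOn ℝ (⊤ : ℕ∞) f Ω) (hΩ : IsOpen Ω) :
    ContDiffOn ℝ (⊤ : ℕ∞) (pdV f) Ω :=
  ((hf.contDiffOn_fderiv hΩ).clm_apply contDiffOn_const).congr fun _ hp =>
    (hf.differentiableAt_of_isOpen hΩ hp).pdV_eq_fderiv

/-- The derivative of a directional derivative is given by the second derivative. -/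
theorem ContDiffOn.fderiv_eq_of_eq_fderiv_apply (hf : ContDiffOn ℝ (⊤ : ℕ∞) f Ω) (hΩ : IsOpen Ω)
    (hp : p ∈ Ω) {v : ℝ × ℝ} (hg : ∀ q ∈ Ω, g q = fderiv ℝ f q v) (w : ℝ × ℝ) :
    fderiv ℝ g p w = fderiv ℝ (fderiv ℝ f) p w v := by
  have h : g =ᶠ[nhds p] fun q => fderiv ℝ f q v := by
    filter_upwards [hΩ.mem_nhds hp] with q hq using hg q hq
  rw [h.fderiv_eq, fderiv_clm_apply
    ((hf.contDiffOn_fderiv hΩ).differentiableAt_of_isOpen hΩ hp) (differentiableAt_const v)]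
  simp

theorem ContDiffOn.pdU_pdV_comm (hf : ContDiffOn ℝ (⊤ : ℕ∞) f Ω) (hΩ : IsOpen Ω) (hp : p ∈ Ω) :
    pdU (pdV f) p = pdV (pdU f) p := by
  rw [((hf.contDiffOn_pdV hΩ).differentiableAt_of_isOpen hΩ hp).pdU_eq_fderiv,
    ((hf.contDiffOn_pdU hΩ).differentiableAt_of_isOpen hΩ hp).pdV_eq_fderiv,
    hf.fderiv_eq_of_eq_fderiv_apply hΩ hp fun q hq =>
      (hf.differentiableAt_of_isOpen hΩ hq).pdV_eq_fderiv,
    hf.fderiv_eq_of_eq_fderiv_apply hΩ hp fun q hq =>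
      (hf.differentiableAt_of_isOpen hΩ hq).pdU_eq_fderiv]
  exact (hf.contDiffAt (hΩ.mem_nhds hp)).isSymmSndFDerivAt
    (by simp only [minSmoothness_of_isRCLikeNormedField]; exact WithTop.coe_le_coe.2 (le_top (a := (2 : ℕ∞)))) _ _

/-- `f` is bounded in norm on `Ω`. -/
def BddNormOn {F : Type*} [Norm F] (f : ℝ × ℝ → F) (Ω : Set (ℝ × ℝ)) : Prop :=
  ∃ C : ℝ, ∀ p ∈ Ω, ‖f p‖ ≤ C

theorem BddNormOn.clm_apply {L : ℝ × ℝ → (ℝ × ℝ →L[ℝ] E)} (hL : BddNormOn L Ω) (v : ℝ × ℝ) :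
    BddNormOn (fun p => L p v) Ω := by
  obtain ⟨C, hC⟩ := hL
  exact ⟨C * ‖v‖, fun p hp => (L p).le_of_opNorm_le (hC p hp) v⟩

theorem BddNormOn.congr {F : Type*} [Norm F] {f g : ℝ × ℝ → F} (hf : BddNormOn f Ω)
    (h : ∀ p ∈ Ω, g p = f p) : BddNormOn g Ω := by
  obtain ⟨C, hC⟩ := hf
  exact ⟨C, fun p hp => h p hp ▸ hC p hp⟩

theorem BddNormOn.prodMk {F G : Type*} [NormedAddCommGroup F] [NormedAddCommGroup G]
    {f : ℝ × ℝ → F} {g : ℝ × ℝ → G} (hf : BddNormOn f Ω) (hg : BddNormOn g Ω) :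
    BddNormOn (fun p => (f p, g p)) Ω := by
  obtain ⟨C, hC⟩ := hf
  obtain ⟨D, hD⟩ := hg
  exact ⟨max C D, fun p hp => max_le_max (hC p hp) (hD p hp)⟩

/-- A continuous function of a bounded function into a proper space is bounded. -/
theorem BddNormOn.comp_continuousOn {F G : Type*} [NormedAddCommGroup F] [ProperSpace F]
    [NormedAddCommGroup G] {f : ℝ × ℝ → F} (hf : BddNormOn f Ω) {K : Set F} (hK : IsClosed K)
    (hfK : ∀ p ∈ Ω, f p ∈ K) {T : F → G} (hT : ContinuousOn T K) :
    BddNormOn (fun p => T (f p)) Ω := by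
  obtain ⟨C, hC⟩ := hf
  obtain ⟨D, hD⟩ := ((isCompact_closedBall (0 : F) C).inter_left hK).exists_bound_of_continuousOn
    (hT.mono Set.inter_subset_left)
  exact ⟨D, fun p hp => hD _ ⟨hfK p hp, by simpa using hC p hp⟩⟩

theorem BddNormOn.comp_continuous {F G : Type*} [NormedAddCommGroup F] [ProperSpace F]
    [NormedAddCommGroup G] {f : ℝ × ℝ → F} (hf : BddNormOn f Ω) {T : F → G} (hT : Continuous T) :
    BddNormOn (fun p => T (f p)) Ω :=
  hf.comp_continuousOn isClosed_univ (fun _ _ => trivial) hT.continuousOn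

theorem bddNormOn_fderiv (hΩ : IsOpen Ω)
    (hb : ∃ C : ℝ, ∀ p ∈ Ω, ‖iteratedFDerivWithin ℝ 1 f Ω p‖ ≤ C) :
    BddNormOn (fderiv ℝ f) Ω := by
  obtain ⟨C, hC⟩ := hb
  refine ⟨C, fun p hp => ?_⟩
  rw [← fderivWithin_of_isOpen hΩ hp, ← norm_iteratedFDerivWithin_one f
    (hΩ.uniqueDiffOn p hp)]
  exact hC p hp

theorem bddNormOn_fderiv_fderiv (hΩ : IsOpen Ω)
    (hb : ∃ C : ℝ, ∀ p ∈ Ω, ‖iteratedFDerivWithin ℝ 2 f Ω p‖ ≤ C) :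
    BddNormOn (fderiv ℝ (fderiv ℝ f)) Ω := by
  obtain ⟨C, hC⟩ := hb
  refine ⟨C, fun p hp => ?_⟩
  have h : fderivWithin ℝ (fderivWithin ℝ f Ω) Ω p = fderivWithin ℝ (fderiv ℝ f) Ω p :=
    fderivWithin_congr (fun q hq => fderivWithin_of_isOpen hΩ hq) (fderivWithin_of_isOpen hΩ hp)
  rw [← fderivWithin_of_isOpen hΩ hp, ← h, ← norm_iteratedFDerivWithin_one _
    (hΩ.uniqueDiffOn p hp), norm_iteratedFDerivWithin_fderivWithin hΩ.uniqueDiffOn hp]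
  exact hC p hp

end PartialDerivatives

theorem HasDerivAt.dot3 {f g : ℝ → ℝ × ℝ × ℝ} {f' g' : ℝ × ℝ × ℝ} {t : ℝ}
    (hf : HasDerivAt f f' t) (hg : HasDerivAt g g' t) :
    HasDerivAt (fun t => dot3 (f t) (g t)) (dot3 f' (g t) + dot3 (f t) g') t := by
  have h {f : ℝ → ℝ × ℝ × ℝ} {f' : ℝ × ℝ × ℝ} (hf : HasDerivAt f f' t) :
      HasDerivAt (fun t => (f t).1) f'.1 t ∧ HasDerivAt (fun t => (f t).2.1) f'.2.1 t ∧
        HasDerivAt (fun t => (f t).2.2) f'.2.2 t :=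
    ⟨hf.fst, hf.snd.fst, hf.snd.snd⟩
  obtain ⟨f1, f2, f3⟩ := h hf
  obtain ⟨g1, g2, g3⟩ := h hg
  refine (((f1.mul g1).add (f2.mul g2)).add (f3.mul g3)).congr_deriv ?_
  simp only [_root_.dot3]
  ring

theorem contDiff_dot3 {n : WithTop ℕ∞} :
    ContDiff ℝ n fun q : (ℝ × ℝ × ℝ) × (ℝ × ℝ × ℝ) => dot3 q.1 q.2 := by
  unfold dot3; fun_prop

theorem contDiff_cross3 {n : WithTop ℕ∞} :
    ContDiff ℝ n fun q : (ℝ × ℝ × ℝ) × (ℝ × ℝ × ℝ) => cross3 q.1 q.2 := by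
  unfold cross3; fun_prop

theorem dot3_self_nonneg (a : ℝ × ℝ × ℝ) : 0 ≤ dot3 a a := by
  unfold dot3; nlinarith [mul_self_nonneg a.1, mul_self_nonneg a.2.1, mul_self_nonneg a.2.2]

theorem dot3_comm (a b : ℝ × ℝ × ℝ) : dot3 a b = dot3 b a := by
  unfold dot3; ring

theorem dot3_smul_left (r : ℝ) (a b : ℝ × ℝ × ℝ) : dot3 (r • a) b = r * dot3 a b := by
  simp only [dot3, Prod.smul_fst, Prod.smul_snd, smul_eq_mul]; ring

theorem dot3_smul_right (r : ℝ) (a b : ℝ × ℝ × ℝ) : dot3 a (r • b) = r * dot3 a b := by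
  rw [dot3_comm, dot3_smul_left, dot3_comm]

theorem dot3_add_left (a b c : ℝ × ℝ × ℝ) : dot3 (a + b) c = dot3 a c + dot3 b c := by
  simp only [dot3, Prod.fst_add, Prod.snd_add]; ring

theorem dot3_add_right (a b c : ℝ × ℝ × ℝ) : dot3 a (b + c) = dot3 a b + dot3 a c := by
  rw [dot3_comm, dot3_add_left, dot3_comm b, dot3_comm c]

theorem norm3_sq (a : ℝ × ℝ × ℝ) : norm3 a ^ 2 = dot3 a a := Real.sq_sqrt (dot3_self_nonneg a)

theorem dot3_cross3_left (a b : ℝ × ℝ × ℝ) : dot3 (cross3 a b) a = 0 := by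
  simp only [dot3, cross3]; ring

theorem dot3_cross3_right (a b : ℝ × ℝ × ℝ) : dot3 (cross3 a b) b = 0 := by
  simp only [dot3, cross3]; ring

/-- Lagrange's identity. -/
theorem dot3_cross3_self (a b : ℝ × ℝ × ℝ) :
    dot3 (cross3 a b) (cross3 a b) = dot3 a a * dot3 b b - dot3 a b ^ 2 := by
  simp only [dot3, cross3]; ring

/-- The scalar product expressed in the frame `a, b, a × b`. -/
theorem dot3_frame (a b x y : ℝ × ℝ × ℝ) :
    (dot3 a a * dot3 b b - dot3 a b ^ 2) * dot3 x y =
      dot3 b b * (dot3 x a * dot3 y a) - dot3 a b * (dot3 x a * dot3 y b + dot3 x b * dot3 y a)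
        + dot3 a a * (dot3 x b * dot3 y b) + dot3 x (cross3 a b) * dot3 y (cross3 a b) := by
  simp only [dot3, cross3]; ring

theorem gdet_eq_norm3_sq (σ : ℝ × ℝ → ℝ × ℝ × ℝ) (p : ℝ × ℝ) :
    gdet σ p = norm3 (cross3 (pdU σ p) (pdV σ p)) ^ 2 := by
  rw [norm3_sq, dot3_cross3_self, gdet]

theorem dot3_unitNormal_pdU (σ : ℝ × ℝ → ℝ × ℝ × ℝ) (p : ℝ × ℝ) :
    dot3 (unitNormal σ p) (pdU σ p) = 0 := by
  rw [unitNormal, dot3_smul_left, dot3_cross3_left, mul_zero]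

theorem dot3_unitNormal_pdV (σ : ℝ × ℝ → ℝ × ℝ × ℝ) (p : ℝ × ℝ) :
    dot3 (unitNormal σ p) (pdV σ p) = 0 := by
  rw [unitNormal, dot3_smul_left, dot3_cross3_right, mul_zero]

theorem dot3_unitNormal_self {σ : ℝ × ℝ → ℝ × ℝ × ℝ} {p : ℝ × ℝ}
    (h : 0 < norm3 (cross3 (pdU σ p) (pdV σ p))) :
    dot3 (unitNormal σ p) (unitNormal σ p) = 1 := by
  rw [unitNormal, dot3_smul_left, dot3_smul_right, ← norm3_sq]
  field_simp

/-- The normalized cross product as a function of the pair of vectors. -/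
def normalizedCross (q : (ℝ × ℝ × ℝ) × (ℝ × ℝ × ℝ)) : ℝ × ℝ × ℝ :=
  (norm3 (cross3 q.1 q.2))⁻¹ • cross3 q.1 q.2

theorem continuous_norm3_cross3 :
    Continuous fun q : (ℝ × ℝ × ℝ) × (ℝ × ℝ × ℝ) => norm3 (cross3 q.1 q.2) := by
  unfold norm3 dot3 cross3; fun_prop

theorem isOpen_norm3_cross3_pos :
    IsOpen {q : (ℝ × ℝ × ℝ) × (ℝ × ℝ × ℝ) | 0 < norm3 (cross3 q.1 q.2)} :=
  isOpen_lt continuous_const continuous_norm3_cross3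

theorem contDiffOn_normalizedCross :
    ContDiffOn ℝ (⊤ : ℕ∞) normalizedCross {q | 0 < norm3 (cross3 q.1 q.2)} := by
  have h : ContDiffOn ℝ (⊤ : ℕ∞) (fun q : (ℝ × ℝ × ℝ) × (ℝ × ℝ × ℝ) => norm3 (cross3 q.1 q.2))
      {q | 0 < norm3 (cross3 q.1 q.2)} :=
    (contDiff_dot3.comp (contDiff_cross3.prodMk contDiff_cross3)).contDiffOn.sqrt
      fun q hq => (Real.sqrt_pos.1 hq).ne'
  exact (h.inv fun q hq => ne_of_gt hq).smul contDiff_cross3.contDiffOn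

/-- Coefficient of `t` in the Gram determinant of `(a + t • x, b + t • y)`. -/
def gramCoeff₁ (a b x y : ℝ × ℝ × ℝ) : ℝ :=
  2 * (dot3 a x * dot3 b b + dot3 a a * dot3 b y - dot3 a b * (dot3 a y + dot3 x b))

/-- Coefficient of `t ^ 2` in the Gram determinant of `(a + t • x, b + t • y)`. -/
def gramCoeff₂ (a b x y : ℝ × ℝ × ℝ) : ℝ :=
  dot3 a a * dot3 y y + dot3 b b * dot3 x x + 4 * (dot3 a x * dot3 b y)
    - (dot3 a y + dot3 x b) ^ 2 - 2 * dot3 a b * dot3 x y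

/-- The Gram determinant of `(a + t • x, b + t • y)` is a quartic polynomial in `t`. -/
theorem gram_add_smul (a b x y : ℝ × ℝ × ℝ) (t : ℝ) :
    dot3 (a + t • x) (a + t • x) * dot3 (b + t • y) (b + t • y)
        - dot3 (a + t • x) (b + t • y) ^ 2 =
      (dot3 a a * dot3 b b - dot3 a b ^ 2) + gramCoeff₁ a b x y * t + gramCoeff₂ a b x y * t ^ 2
        + gramCoeff₁ x y a b * t ^ 3 + (dot3 x x * dot3 y y - dot3 x y ^ 2) * t ^ 4 := by
  simp only [dot3_add_left, dot3_add_right, dot3_smul_left, dot3_smul_right, gramCoeff₁,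
    gramCoeff₂, dot3_comm x a, dot3_comm y b]
  ring

/-- First and second order terms of the Gram determinant under a normal variation with zero mean
curvature; `nu`, `nv` are the derivatives of the unit normal `n` (Weingarten equations). -/
theorem gramCoeff_normal {a b n nu nv : ℝ × ℝ × ℝ} {r h₁₁ h₁₂ h₂₂ : ℝ} (f fu fv : ℝ)
    (hD : dot3 a a * dot3 b b - dot3 a b ^ 2 ≠ 0) (hr : cross3 a b = r • n)
    (hna : dot3 n a = 0) (hnb : dot3 n b = 0) (hnn : dot3 n n = 1)
    (hun : dot3 nu n = 0) (hvn : dot3 nv n = 0)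
    (hua : dot3 nu a = -h₁₁) (hub : dot3 nu b = -h₁₂)
    (hva : dot3 nv a = -h₁₂) (hvb : dot3 nv b = -h₂₂)
    (hH : dot3 b b * h₁₁ - 2 * dot3 a b * h₁₂ + dot3 a a * h₂₂ = 0) :
    gramCoeff₁ a b (fu • n + f • nu) (fv • n + f • nv) = 0 ∧
    gramCoeff₂ a b (fu • n + f • nu) (fv • n + f • nv) =
      dot3 b b * fu ^ 2 - 2 * dot3 a b * fu * fv + dot3 a a * fv ^ 2
        + 2 * (h₁₁ * h₂₂ - h₁₂ ^ 2) * f ^ 2 := by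
  have k₁₁ := dot3_frame a b nu nu
  have k₁₂ := dot3_frame a b nu nv
  have k₂₂ := dot3_frame a b nv nv
  rw [hr] at k₁₁ k₁₂ k₂₂
  simp only [dot3_smul_right, hun, hvn, hua, hub, hva, hvb] at k₁₁ k₁₂ k₂₂
  have hk : dot3 a a * dot3 nv nv + dot3 b b * dot3 nu nu - 2 * dot3 a b * dot3 nu nv =
      -2 * (h₁₁ * h₂₂ - h₁₂ ^ 2) := by
    apply mul_left_cancel₀ hD
    linear_combination dot3 a a * k₂₂ + dot3 b b * k₁₁ - 2 * dot3 a b * k₁₂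
      + (dot3 b b * h₁₁ - 2 * dot3 a b * h₁₂ + dot3 a a * h₂₂) * hH
  have han : dot3 a n = 0 := by rw [dot3_comm, hna]
  have hbn : dot3 b n = 0 := by rw [dot3_comm, hnb]
  have hnu : dot3 n nu = 0 := by rw [dot3_comm, hun]
  have hnv : dot3 n nv = 0 := by rw [dot3_comm, hvn]
  have hau : dot3 a nu = -h₁₁ := by rw [dot3_comm, hua]
  have hav : dot3 a nv = -h₁₂ := by rw [dot3_comm, hva]
  have hbv : dot3 b nv = -h₂₂ := by rw [dot3_comm, hvb]
  simp only [gramCoeff₁, gramCoeff₂, dot3_add_left, dot3_add_right, dot3_smul_left,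
    dot3_smul_right, han, hbn, hnb, hnn, hnu, hnv, hun, hvn, hau, hav, hub, hbv]
  constructor
  · linear_combination -2 * f * hH
  · linear_combination f ^ 2 * hk

section NormalVariation

variable {Ω : Set (ℝ × ℝ)} {σ : ℝ × ℝ → ℝ × ℝ × ℝ} {φ : ℝ × ℝ → ℝ}

theorem contDiffOn_unitNormal (hΩ : IsOpen Ω) (hσ : ContDiffOn ℝ (⊤ : ℕ∞) σ Ω)
    (hpos : ∀ p ∈ Ω, 0 < norm3 (cross3 (pdU σ p) (pdV σ p))) :
    ContDiffOn ℝ (⊤ : ℕ∞) (unitNormal σ) Ω :=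
  contDiffOn_normalizedCross.comp (f := fun p => (pdU σ p, pdV σ p)) ((hσ.contDiffOn_pdU hΩ).prodMk (hσ.contDiffOn_pdV hΩ)) hpos

theorem gdet_normalVariation {p : ℝ × ℝ} (hσ : DifferentiableAt ℝ σ p)
    (hψ : DifferentiableAt ℝ (fun q => φ q • unitNormal σ q) p) (t : ℝ) :
    gdet (normalVariation σ φ t) p =
      gdet σ p
        + gramCoeff₁ (pdU σ p) (pdV σ p) (pdU (fun q => φ q • unitNormal σ q) p)
          (pdV (fun q => φ q • unitNormal σ q) p) * t
        + gramCoeff₂ (pdU σ p) (pdV σ p) (pdU (fun q => φ q • unitNormal σ q) p)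
          (pdV (fun q => φ q • unitNormal σ q) p) * t ^ 2
        + gramCoeff₁ (pdU (fun q => φ q • unitNormal σ q) p)
          (pdV (fun q => φ q • unitNormal σ q) p) (pdU σ p) (pdV σ p) * t ^ 3
        + gdet (fun q => φ q • unitNormal σ q) p * t ^ 4 := by
  have hu : pdU (normalVariation σ φ t) p =
      pdU σ p + t • pdU (fun q => φ q • unitNormal σ q) p := by
    refine HasDerivAt.deriv ?_
    simpa only [normalVariation, mul_smul] using!
      hσ.hasDerivAt_pdU.add (hψ.hasDerivAt_pdU.const_smul t)
  have hv : pdV (normalVariation σ φ t) p =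
      pdV σ p + t • pdV (fun q => φ q • unitNormal σ q) p := by
    refine HasDerivAt.deriv ?_
    simpa only [normalVariation, mul_smul] using!
      hσ.hasDerivAt_pdV.add (hψ.hasDerivAt_pdV.const_smul t)
  rw [gdet, hu, hv, gram_add_smul, gdet, gdet]

/-- The second-variation density: the first-order term of `det g_t` vanishes for a minimal
surface and the second-order one is given by `|∇φ|² + 2κφ²`. -/
theorem gramCoeff_normalVariation (hΩ : IsOpen Ω) (hσ : ContDiffOn ℝ (⊤ : ℕ∞) σ Ω)
    (hpos : ∀ p ∈ Ω, 0 < norm3 (cross3 (pdU σ p) (pdV σ p)))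
    (hφ : ContDiffOn ℝ (⊤ : ℕ∞) φ Ω) {p : ℝ × ℝ} (hp : p ∈ Ω)
    (hmin : dot3 (pdV σ p) (pdV σ p) * dot3 (pdU (pdU σ) p) (unitNormal σ p)
        - 2 * dot3 (pdU σ p) (pdV σ p) * dot3 (pdV (pdU σ) p) (unitNormal σ p)
        + dot3 (pdU σ p) (pdU σ p) * dot3 (pdV (pdV σ) p) (unitNormal σ p) = 0) :
    gramCoeff₁ (pdU σ p) (pdV σ p) (pdU (fun q => φ q • unitNormal σ q) p)
        (pdV (fun q => φ q • unitNormal σ q) p) = 0 ∧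
    gramCoeff₂ (pdU σ p) (pdV σ p) (pdU (fun q => φ q • unitNormal σ q) p)
        (pdV (fun q => φ q • unitNormal σ q) p) =
      dot3 (pdV σ p) (pdV σ p) * pdU φ p ^ 2
        - 2 * dot3 (pdU σ p) (pdV σ p) * pdU φ p * pdV φ p
        + dot3 (pdU σ p) (pdU σ p) * pdV φ p ^ 2
        + 2 * (dot3 (pdU (pdU σ) p) (unitNormal σ p) * dot3 (pdV (pdV σ) p) (unitNormal σ p)
            - dot3 (pdV (pdU σ) p) (unitNormal σ p) ^ 2) * φ p ^ 2 := by
  have dN := (contDiffOn_unitNormal hΩ hσ hpos).differentiableAt_of_isOpen hΩ hp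
  have dφ := hφ.differentiableAt_of_isOpen hΩ hp
  have da := (hσ.contDiffOn_pdU hΩ).differentiableAt_of_isOpen hΩ hp
  have db := (hσ.contDiffOn_pdV hΩ).differentiableAt_of_isOpen hΩ hp
  have hX : pdU (fun q => φ q • unitNormal σ q) p =
      pdU φ p • unitNormal σ p + φ p • pdU (unitNormal σ) p := by
    rw [add_comm]
    exact (dφ.hasDerivAt_pdU.smul dN.hasDerivAt_pdU).deriv
  have hY : pdV (fun q => φ q • unitNormal σ q) p =
      pdV φ p • unitNormal σ p + φ p • pdV (unitNormal σ) p := by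
    rw [add_comm]
    exact (dφ.hasDerivAt_pdV.smul dN.hasDerivAt_pdV).deriv
  have hnn := dot3_unitNormal_self (hpos p hp)
  have hnhds : ∀ᶠ q in nhds p, dot3 (unitNormal σ q) (unitNormal σ q) = 1 := by
    filter_upwards [hΩ.mem_nhds hp] with q hq using dot3_unitNormal_self (hpos q hq)
  have nu := (dN.hasDerivAt_pdU.dot3 dN.hasDerivAt_pdU).unique <|
    (hasDerivAt_const p.1 (1 : ℝ)).congr_of_eventuallyEq <|
      (Continuous.tendsto (by fun_prop : Continuous fun x : ℝ => (x, p.2)) p.1).eventually hnhds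
  have nv := (dN.hasDerivAt_pdV.dot3 dN.hasDerivAt_pdV).unique <|
    (hasDerivAt_const p.2 (1 : ℝ)).congr_of_eventuallyEq <|
      (Continuous.tendsto (by fun_prop : Continuous fun y : ℝ => (p.1, y)) p.2).eventually hnhds
  have nua := (dN.hasDerivAt_pdU.dot3 da.hasDerivAt_pdU).unique <|
    (hasDerivAt_const p.1 (0 : ℝ)).congr_of_eventuallyEq <|
      .of_forall fun x => dot3_unitNormal_pdU σ (x, p.2)
  have nub := (dN.hasDerivAt_pdU.dot3 db.hasDerivAt_pdU).unique <|
    (hasDerivAt_const p.1 (0 : ℝ)).congr_of_eventuallyEq <|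
      .of_forall fun x => dot3_unitNormal_pdV σ (x, p.2)
  have nva := (dN.hasDerivAt_pdV.dot3 da.hasDerivAt_pdV).unique <|
    (hasDerivAt_const p.2 (0 : ℝ)).congr_of_eventuallyEq <|
      .of_forall fun y => dot3_unitNormal_pdU σ (p.1, y)
  have nvb := (dN.hasDerivAt_pdV.dot3 db.hasDerivAt_pdV).unique <|
    (hasDerivAt_const p.2 (0 : ℝ)).congr_of_eventuallyEq <|
      .of_forall fun y => dot3_unitNormal_pdV σ (p.1, y)
  simp only [Prod.mk.eta] at nu nv nua nub nva nvb
  rw [dot3_comm (unitNormal σ p) (pdU (unitNormal σ) p)] at nu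
  rw [dot3_comm (unitNormal σ p) (pdV (unitNormal σ) p)] at nv
  rw [hσ.pdU_pdV_comm hΩ hp] at nub
  rw [dot3_comm (unitNormal σ p) (pdV _ p)] at nub nva nvb
  rw [dot3_comm (unitNormal σ p) (pdU _ p)] at nua
  rw [hX, hY]
  refine gramCoeff_normal (r := norm3 (cross3 (pdU σ p) (pdV σ p))) (φ p) (pdU φ p) (pdV φ p) ?_ ?_
    (dot3_unitNormal_pdU σ p) (dot3_unitNormal_pdV σ p) hnn
    (by linarith) (by linarith) (by linarith) (by linarith) (by linarith) (by linarith) hmin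
  · have := gdet_eq_norm3_sq σ p
    rw [gdet] at this
    rw [this]
    exact (pow_pos (hpos p hp) 2).ne'
  · rw [unitNormal, smul_inv_smul₀ (hpos p hp).ne']

/-- The derivative of the unit normal is bounded when the surface is uniformly regular with
bounded derivatives of order one and two. -/
theorem bddNormOn_fderiv_unitNormal (hΩ : IsOpen Ω) (hσ : ContDiffOn ℝ (⊤ : ℕ∞) σ Ω)
    (hσ₁ : BddNormOn (fderiv ℝ σ) Ω) (hσ₂ : BddNormOn (fderiv ℝ (fderiv ℝ σ)) Ω)
    {c : ℝ} (hc : 0 < c) (hcross : ∀ p ∈ Ω, c ≤ norm3 (cross3 (pdU σ p) (pdV σ p)))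
    (v : ℝ × ℝ) : BddNormOn (fun p => fderiv ℝ (unitNormal σ) p v) Ω := by
  have hU := hσ.contDiffOn_pdU hΩ
  have hV := hσ.contDiffOn_pdV hΩ
  have eU : ∀ q ∈ Ω, pdU σ q = fderiv ℝ σ q (1, 0) := fun q hq =>
    (hσ.differentiableAt_of_isOpen hΩ hq).pdU_eq_fderiv
  have eV : ∀ q ∈ Ω, pdV σ q = fderiv ℝ σ q (0, 1) := fun q hq =>
    (hσ.differentiableAt_of_isOpen hΩ hq).pdV_eq_fderiv
  have b₁ : BddNormOn (fun p => (pdU σ p, pdV σ p)) Ω :=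
    ((hσ₁.clm_apply (1, 0)).congr eU).prodMk ((hσ₁.clm_apply (0, 1)).congr eV)
  have b₂ : BddNormOn (fun p => fderiv ℝ (fderiv ℝ σ) p v) Ω := by
    obtain ⟨C, hC⟩ := hσ₂
    exact ⟨C * ‖v‖, fun p hp => (fderiv ℝ (fderiv ℝ σ) p).le_of_opNorm_le (hC p hp) v⟩
  have b₃ : BddNormOn (fun p => (fderiv ℝ (pdU σ) p v, fderiv ℝ (pdV σ) p v)) Ω :=
    ((b₂.clm_apply (1, 0)).congr fun p hp => hσ.fderiv_eq_of_eq_fderiv_apply hΩ hp eU v).prodMk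
      ((b₂.clm_apply (0, 1)).congr fun p hp => hσ.fderiv_eq_of_eq_fderiv_apply hΩ hp eV v)
  have hK : IsClosed {q : (ℝ × ℝ × ℝ) × (ℝ × ℝ × ℝ) | c ≤ norm3 (cross3 q.1 q.2)} :=
    isClosed_le continuous_const continuous_norm3_cross3
  obtain ⟨C, hC⟩ := b₁.comp_continuousOn (T := fderiv ℝ normalizedCross) hK hcross
    ((contDiffOn_normalizedCross.contDiffOn_fderiv isOpen_norm3_cross3_pos).continuousOn.mono
      fun q hq => hc.trans_le hq)
  obtain ⟨D, hD⟩ := b₃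
  refine ⟨C * D, fun p hp => ?_⟩
  have d := (hU.differentiableAt_of_isOpen hΩ hp).hasFDerivAt.prodMk
    (hV.differentiableAt_of_isOpen hΩ hp).hasFDerivAt
  have dT : DifferentiableAt ℝ normalizedCross (pdU σ p, pdV σ p) :=
    (contDiffOn_normalizedCross.contDiffAt (isOpen_norm3_cross3_pos.mem_nhds
      (hc.trans_le (hcross p hp)))).differentiableAt (by simp)
  have e : fderiv ℝ (unitNormal σ) p = _ :=
    (HasFDerivAt.comp (f := fun p => (pdU σ p, pdV σ p)) p dT.hasFDerivAt d).fderiv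
  simp only [e]
  exact ContinuousLinearMap.le_of_opNorm_le_of_le (fderiv ℝ normalizedCross _) (hC p hp) (hD p hp)

end NormalVariation

/-- if moreover `σ` is minimal (`g₂₂h₁₁ − 2g₁₂h₁₂ + g₁₁h₂₂ = 0` on `Ω`),
then the area function `A(t) = ∫_Ω √(det g_t)` is twice differentiable at `t = 0`,
with `A'(0) = 0` and `A''(0)` given by the second-variation integral. -/
theorem normalVariation_second_variation
    (Ω : Set (ℝ × ℝ)) (hΩo : IsOpen Ω) (hΩb : Bornology.IsBounded Ω)
    (σ : ℝ × ℝ → ℝ × ℝ × ℝ) (hσ : ContDiffOn ℝ (⊤ : ℕ∞) σ Ω)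
    (hσb : ∀ i : ℕ, i ≤ 2 → ∃ C : ℝ, ∀ p ∈ Ω, ‖iteratedFDerivWithin ℝ i σ Ω p‖ ≤ C)
    (hcross : ∃ c : ℝ, 0 < c ∧ ∀ p ∈ Ω, c ≤ norm3 (cross3 (pdU σ p) (pdV σ p)))
    (φ : ℝ × ℝ → ℝ) (hφ : ContDiffOn ℝ (⊤ : ℕ∞) φ Ω)
    (hφb : ∀ i : ℕ, i ≤ 2 → ∃ C : ℝ, ∀ p ∈ Ω, ‖iteratedFDerivWithin ℝ i φ Ω p‖ ≤ C)
    (hmin : ∀ p ∈ Ω,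
      dot3 (pdV σ p) (pdV σ p) * dot3 (pdU (pdU σ) p) (unitNormal σ p)
        - 2 * dot3 (pdU σ p) (pdV σ p) * dot3 (pdV (pdU σ) p) (unitNormal σ p)
        + dot3 (pdU σ p) (pdU σ p) * dot3 (pdV (pdV σ) p) (unitNormal σ p) = 0) :
    HasDerivAt (fun t => ∫ p in Ω, Real.sqrt (gdet (normalVariation σ φ t) p)) 0 0 ∧
    HasDerivAt (deriv (fun t => ∫ p in Ω, Real.sqrt (gdet (normalVariation σ φ t) p)))
      (∫ p in Ω,
        ((dot3 (pdV σ p) (pdV σ p) / gdet σ p) * pdU φ p ^ 2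
          + 2 * (-dot3 (pdU σ p) (pdV σ p) / gdet σ p) * pdU φ p * pdV φ p
          + (dot3 (pdU σ p) (pdU σ p) / gdet σ p) * pdV φ p ^ 2
          + 2 * ((dot3 (pdU (pdU σ) p) (unitNormal σ p) * dot3 (pdV (pdV σ) p) (unitNormal σ p)
              - dot3 (pdV (pdU σ) p) (unitNormal σ p) ^ 2) / gdet σ p) * φ p ^ 2)
          * Real.sqrt (gdet σ p))
      0 := by
  obtain ⟨c, hc, hcr⟩ := hcross
  have hpos : ∀ p ∈ Ω, 0 < norm3 (cross3 (pdU σ p) (pdV σ p)) := fun p hp => hc.trans_le (hcr p hp)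
  have hσ₁ := bddNormOn_fderiv hΩo (hσb 1 (by norm_num))
  have hσ₂ := bddNormOn_fderiv_fderiv hΩo (hσb 2 le_rfl)
  have hφ₁ := bddNormOn_fderiv hΩo (hφb 1 (by norm_num))
  have hφ₀ : BddNormOn φ Ω := by
    simpa only [norm_iteratedFDerivWithin_zero] using! hφb 0 (by norm_num)
  have hN := contDiffOn_unitNormal hΩo hσ hpos
  have hψ := hφ.smul hN
  set ψ : ℝ × ℝ → ℝ × ℝ × ℝ := fun q => φ q • unitNormal σ q with hψdef
  have b₁ : BddNormOn (fun p => (pdU σ p, pdV σ p)) Ω :=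
    ((hσ₁.clm_apply (1, 0)).congr fun p hp =>
      (hσ.differentiableAt_of_isOpen hΩo hp).pdU_eq_fderiv).prodMk
    ((hσ₁.clm_apply (0, 1)).congr fun p hp =>
      (hσ.differentiableAt_of_isOpen hΩo hp).pdV_eq_fderiv)
  have bN : BddNormOn (unitNormal σ) Ω :=
    b₁.comp_continuousOn (T := normalizedCross)
      (isClosed_le continuous_const continuous_norm3_cross3) hcr
      (contDiffOn_normalizedCross.continuousOn.mono fun q hq => hc.trans_le hq)
  have bψ (v : ℝ × ℝ) : BddNormOn (fun p => fderiv ℝ ψ p v) Ω := by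
    refine BddNormOn.congr ((((hφ₁.clm_apply v).prodMk bN).prodMk (hφ₀.prodMk
      (bddNormOn_fderiv_unitNormal hΩo hσ hσ₁ hσ₂ hc hcr v))).comp_continuous
      (T := fun q => q.2.1 • q.2.2 + q.1.1 • q.1.2) (by fun_prop)) fun p hp => ?_
    rw [hψdef, fderiv_fun_smul (hφ.differentiableAt_of_isOpen hΩo hp)
      (hN.differentiableAt_of_isOpen hΩo hp)]
    simp
  have b₂ : BddNormOn (fun p => (pdU ψ p, pdV ψ p)) Ω :=
    ((bψ (1, 0)).congr fun p hp => (hψ.differentiableAt_of_isOpen hΩo hp).pdU_eq_fderiv).prodMk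
    ((bψ (0, 1)).congr fun p hp => (hψ.differentiableAt_of_isOpen hΩo hp).pdV_eq_fderiv)
  set J : ℝ × ℝ → ((ℝ × ℝ × ℝ) × (ℝ × ℝ × ℝ)) × ((ℝ × ℝ × ℝ) × (ℝ × ℝ × ℝ)) :=
    fun p => ((pdU σ p, pdV σ p), (pdU ψ p, pdV ψ p))
  have bJ : BddNormOn J Ω := b₁.prodMk b₂
  have cJ : ContinuousOn J Ω :=
    ((hσ.contDiffOn_pdU hΩo).continuousOn.prodMk (hσ.contDiffOn_pdV hΩo).continuousOn).prodMk
      ((hψ.contDiffOn_pdU hΩo).continuousOn.prodMk (hψ.contDiffOn_pdV hΩo).continuousOn)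
  have coeff {c : ℝ × ℝ → ℝ} (T : ((ℝ × ℝ × ℝ) × (ℝ × ℝ × ℝ)) × ((ℝ × ℝ × ℝ) × (ℝ × ℝ × ℝ)) → ℝ)
      (hT : Continuous T) (hcT : ∀ p, c p = T (J p)) :
      AEMeasurable c (volume.restrict Ω) ∧ BddNormOn c Ω :=
    ⟨((hT.comp_continuousOn cJ).congr fun p _ => hcT p).aemeasurable hΩo.measurableSet,
      (bJ.comp_continuous hT).congr fun p _ => hcT p⟩
  obtain ⟨m₀, C₀, hC₀⟩ := coeff (c := gdet σ)
    (fun q => dot3 q.1.1 q.1.1 * dot3 q.1.2 q.1.2 - dot3 q.1.1 q.1.2 ^ 2)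
    (by unfold dot3; fun_prop) fun p => rfl
  obtain ⟨m₂, C₂, hC₂⟩ := coeff
    (c := fun p => gramCoeff₂ (pdU σ p) (pdV σ p) (pdU ψ p) (pdV ψ p))
    (fun q => gramCoeff₂ q.1.1 q.1.2 q.2.1 q.2.2)
    (by unfold gramCoeff₂ dot3; fun_prop) fun p => rfl
  obtain ⟨m₃, C₃, hC₃⟩ := coeff
    (c := fun p => gramCoeff₁ (pdU ψ p) (pdV ψ p) (pdU σ p) (pdV σ p))
    (fun q => gramCoeff₁ q.2.1 q.2.2 q.1.1 q.1.2)
    (by unfold gramCoeff₁ dot3; fun_prop) fun p => rfl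
  obtain ⟨m₄, C₄, hC₄⟩ := coeff (c := gdet ψ)
    (fun q => dot3 q.2.1 q.2.1 * dot3 q.2.2 q.2.2 - dot3 q.2.1 q.2.2 ^ 2)
    (by unfold dot3; fun_prop) fun p => rfl
  have hfin : IsFiniteMeasure (volume.restrict Ω) := ⟨by simpa using hΩb.measure_lt_top⟩
  have hg (p) (hp : p ∈ Ω) : c ^ 2 ≤ gdet σ p := by
    rw [gdet_eq_norm3_sq]
    exact pow_le_pow_left₀ hc.le (hcr p hp) 2
  have hcoef (p) (hp : p ∈ Ω) := gramCoeff_normalVariation hΩo hσ hpos hφ hp (hmin p hp)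
  have hae {q : ℝ × ℝ → Prop} (h : ∀ p ∈ Ω, q p) : ∀ᵐ p ∂volume.restrict Ω, q p :=
    (ae_restrict_iff' hΩo.measurableSet).2 (.of_forall h)
  obtain ⟨h1, h2⟩ := hasDerivAt_integral_sqrt_quartic (M := max (max C₀ C₂) (max C₃ C₄))
    (pow_pos hc 2) m₀ m₂ m₃ m₄
    (hae fun p hp => ⟨hg p hp, (le_abs_self _).trans ((hC₀ p hp).trans (by simp))⟩)
    (hae fun p hp => (hC₂ p hp).trans (by simp)) (hae fun p hp => (hC₃ p hp).trans (by simp))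
    (hae fun p hp => (hC₄ p hp).trans (by simp))
  have hA : (fun t => ∫ p in Ω, √(gdet (normalVariation σ φ t) p)) = fun t => ∫ p in Ω,
      √(gdet σ p + gramCoeff₂ (pdU σ p) (pdV σ p) (pdU ψ p) (pdV ψ p) * t ^ 2
        + gramCoeff₁ (pdU ψ p) (pdV ψ p) (pdU σ p) (pdV σ p) * t ^ 3 + gdet ψ p * t ^ 4) := by
    funext t
    refine setIntegral_congr_fun hΩo.measurableSet fun p hp => ?_
    simp only [gdet_normalVariation (hσ.differentiableAt_of_isOpen hΩo hp)
      (hψ.differentiableAt_of_isOpen hΩo hp), (hcoef p hp).1, zero_mul, add_zero, hψdef]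
  rw [hA]
  refine ⟨h1, h2.congr_deriv (setIntegral_congr_fun hΩo.measurableSet fun p hp => ?_)⟩
  have hgp : 0 < gdet σ p := (pow_pos hc 2).trans_le (hg p hp)
  have hs : 0 < √(gdet σ p) := Real.sqrt_pos.2 hgp
  simp only [hψdef, (hcoef p hp).2]
  rw [div_eq_iff hs.ne', mul_assoc _ √(gdet σ p) √(gdet σ p), Real.mul_self_sqrt hgp.le]
  field_simp
  ring
end
end
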